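/- Let V be an irreducible integrable 𝔏(A)-module with finite-dimensional weight spaces on which the affine center K⊗1 acts trivially. Then there exists a cofinite ideal R of A such that (𝔏⊗R)·V = 0. -/

import Mathlib

noncomputable section

/-!
Common setup: a realization of the loop affine-Virasoro algebra
`𝔏(A) = ((g̊ ⊗ ℂ[t,t⁻¹] ⊕ ℂK) ⋊ Vir) ⊗ A`.

* `g` plays the role of the finite dimensional simple Lie algebra `g̊`.
* `A` is a commutative associative unital `ℂ`-algebra.
* `L` plays the role of `𝔏(A)`; the structure fields record the generators
  `E n x a = (x ⊗ tⁿ) ⊗ a`, `D n a = dₙ ⊗ a`, `K a = K ⊗ a`, `C a = C ⊗ a`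
  together with the defining bracket relations, and the fact that the
  generators span `L`.
-/

/-- An ideal of a `ℂ`-algebra is cofinite if the quotient is finite dimensional. -/
def IsCofiniteIdeal {A : Type*} [CommRing A] [Algebra ℂ A] (I : Ideal A) : Prop :=
  FiniteDimensional ℂ (A ⧸ I)

/-- A realization of the loop affine-Virasoro algebra `𝔏(A)`. -/
structure LoopAffVir (g : Type*) [LieRing g] [LieAlgebra ℂ g]
    (A : Type*) [CommRing A] [Algebra ℂ A]
    (L : Type*) [LieRing L] [LieAlgebra ℂ L] : Type _ where
  /-- the Cartan subalgebra `h̊` of `g̊` -/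
  H : LieSubalgebra ℂ g
  isCartan : H.IsCartanSubalgebra
  /-- the invariant nondegenerate symmetric bilinear form on `g̊` -/
  form : g →ₗ[ℂ] g →ₗ[ℂ] ℂ
  form_symm : ∀ x y : g, form x y = form y x
  form_nondeg : ∀ x : g, (∀ y : g, form x y = 0) → x = 0
  form_invariant : ∀ x y z : g, form ⁅x, y⁆ z = form x ⁅y, z⁆
  /-- the root space `g̊_α` -/
  rootSp : Module.Dual ℂ H → Submodule ℂ g
  rootSp_def : ∀ (α : Module.Dual ℂ H) (x : g),
      x ∈ rootSp α ↔ ∀ h : H, ⁅(h : g), x⁆ = α h • x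
  /-- a choice of positive roots `Δ̊₊` -/
  Δplus : Set (Module.Dual ℂ H)
  Δplus_root : ∀ α ∈ Δplus, α ≠ 0 ∧ rootSp α ≠ ⊥
  Δplus_cover : ∀ α : Module.Dual ℂ H, α ≠ 0 → rootSp α ≠ ⊥ → α ∈ Δplus ∨ -α ∈ Δplus
  Δplus_disj : ∀ α ∈ Δplus, -α ∉ Δplus
  /-- `E n x a = (x ⊗ tⁿ) ⊗ a` -/
  E : ℤ → g →ₗ[ℂ] A →ₗ[ℂ] L
  /-- `D n a = dₙ ⊗ a` -/
  D : ℤ → A →ₗ[ℂ] L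
  /-- `K a = K ⊗ a` (affine center) -/
  K : A →ₗ[ℂ] L
  /-- `C a = C ⊗ a` (Virasoro center) -/
  C : A →ₗ[ℂ] L
  lie_EE : ∀ (n m : ℤ) (x y : g) (a b : A),
      ⁅E n x a, E m y b⁆ = E (n + m) ⁅x, y⁆ (a * b)
        + (if m = -n then (n : ℂ) * form x y else 0) • K (a * b)
  lie_DE : ∀ (n m : ℤ) (x : g) (a b : A),
      ⁅D n a, E m x b⁆ = (m : ℂ) • E (m + n) x (a * b)
  lie_DD : ∀ (n m : ℤ) (a b : A),
      ⁅D n a, D m b⁆ = ((m : ℂ) - (n : ℂ)) • D (n + m) (a * b)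
        + (if m = -n then (((n : ℂ) ^ 3 - (n : ℂ)) / 12) else 0) • C (a * b)
  K_central : ∀ (a : A) (z : L), ⁅K a, z⁆ = 0
  C_central : ∀ (a : A) (z : L), ⁅C a, z⁆ = 0
  span_top : Submodule.span ℂ
      ({z : L | ∃ (n : ℤ) (x : g) (a : A), z = E n x a}
        ∪ {z : L | ∃ (n : ℤ) (a : A), z = D n a}
        ∪ {z : L | ∃ a : A, z = K a}
        ∪ {z : L | ∃ a : A, z = C a}) = ⊤

namespace LoopAffVir

variable {g A L : Type*} [LieRing g] [LieAlgebra ℂ g] [CommRing A] [Algebra ℂ A]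
  [LieRing L] [LieAlgebra ℂ L] (S : LoopAffVir g A L)

/-- Generators of the Cartan subalgebra `h̄ = h̊ ⊕ ℂK ⊕ ℂd₀ ⊕ ℂC ⊆ 𝔏 ⊗ 1`. -/
def cartanSet : Set L :=
  {z : L | ∃ h ∈ S.H, z = S.E 0 h 1} ∪ {S.K 1, S.D 0 1, S.C 1}

/-- The Cartan subalgebra `h̄` of `𝔏(A)`. -/
def cartan : Submodule ℂ L := Submodule.span ℂ S.cartanSet

/-- `h ∈ h̊` as an element of `h̄`. -/
def eH (h : S.H) : S.cartan :=
  ⟨S.E 0 h 1, Submodule.subset_span (Set.mem_union_left _ ⟨(h : g), h.2, rfl⟩)⟩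

/-- `K ⊗ 1` as an element of `h̄`. -/
def K1 : S.cartan :=
  ⟨S.K 1, Submodule.subset_span (Set.mem_union_right _ (by simp))⟩

/-- `d₀ ⊗ 1` as an element of `h̄`. -/
def d0 : S.cartan :=
  ⟨S.D 0 1, Submodule.subset_span (Set.mem_union_right _ (by simp))⟩

/-- `C ⊗ 1` as an element of `h̄`. -/
def C1 : S.cartan :=
  ⟨S.C 1, Submodule.subset_span (Set.mem_union_right _ (by simp))⟩

variable (V : Type*) [AddCommGroup V] [Module ℂ V] [LieRingModule L V] [LieModule ℂ L V]

/-- The weight space of an `𝔏(A)`-module attached to `χ ∈ h̄*`. -/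
def wtSpace (χ : Module.Dual ℂ S.cartan) : Submodule ℂ V where
  carrier := {v : V | ∀ h : S.cartan, ⁅(h : L), v⁆ = χ h • v}
  add_mem' := by
    intro a b ha hb h
    rw [lie_add, ha h, hb h, smul_add]
  zero_mem' := by
    intro h
    rw [lie_zero, smul_zero]
  smul_mem' := by
    intro c v hv h
    rw [lie_smul, hv h, smul_comm]

/-- The set of weights `P(V)`. -/
def weights : Set (Module.Dual ℂ S.cartan) := {χ | S.wtSpace V χ ≠ ⊥}

/-- `V` is a weight module: it is the (direct) sum of its weight spaces. -/
def IsWeightModule : Prop := (⨆ χ : Module.Dual ℂ S.cartan, S.wtSpace V χ) = ⊤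

/-- All weight spaces are finite dimensional. -/
def HasFinDimWeightSpaces : Prop :=
  ∀ χ : Module.Dual ℂ S.cartan, FiniteDimensional ℂ (S.wtSpace V χ)

/-- Integrability: `V` is a weight module with finite dimensional weight spaces on which all
real root vectors `(x ⊗ tⁿ) ⊗ a`, `x ∈ g̊_α`, `α ∈ Δ̊`, act locally nilpotently. -/
def IsIntegrable : Prop :=
  S.IsWeightModule V ∧ S.HasFinDimWeightSpaces V ∧
    ∀ α : Module.Dual ℂ S.H, α ≠ 0 → S.rootSp α ≠ ⊥ →
      ∀ x ∈ S.rootSp α, ∀ (n : ℤ) (a : A) (v : V),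
        ∃ N : ℕ, ((LieModule.toEnd ℂ L V) (S.E n x a) ^ N) v = 0

/-- The highest weight space
`M = {v ∈ V : (x ⊗ tⁿ ⊗ a) v = 0 ∀ x ∈ g̊_α, α ∈ Δ̊₊, n ∈ ℤ, a ∈ A}` for the second
triangular decomposition. -/
def hwSpace : Submodule ℂ V where
  carrier := {v : V | ∀ α ∈ S.Δplus, ∀ x ∈ S.rootSp α, ∀ (n : ℤ) (a : A), ⁅S.E n x a, v⁆ = 0}
  add_mem' := by
    intro u w hu hw α hα x hx n a
    rw [lie_add, hu α hα x hx n a, hw α hα x hx n a, add_zero]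
  zero_mem' := by
    intro α hα x hx n a
    rw [lie_zero]
  smul_mem' := by
    intro t v hv α hα x hx n a
    rw [lie_smul, hv α hα x hx n a, smul_zero]

/-- Generators of `𝔏(A)⁺ = (n₊ ⊕ Vir⁺) ⊗ A` for the natural triangular decomposition. -/
def plusSet : Set L :=
  {z : L | ∃ n : ℤ, 0 < n ∧ ∃ (x : g) (a : A), z = S.E n x a} ∪
  {z : L | ∃ α ∈ S.Δplus, ∃ x ∈ S.rootSp α, ∃ a : A, z = S.E 0 x a} ∪
  {z : L | ∃ n : ℤ, 0 < n ∧ ∃ a : A, z = S.D n a}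

/-- Generators of `𝔏(A)⁻ = (n₋ ⊕ Vir⁻) ⊗ A` for the natural triangular decomposition. -/
def minusSet : Set L :=
  {z : L | ∃ n : ℤ, n < 0 ∧ ∃ (x : g) (a : A), z = S.E n x a} ∪
  {z : L | ∃ α ∈ S.Δplus, ∃ x ∈ S.rootSp (-α), ∃ a : A, z = S.E 0 x a} ∪
  {z : L | ∃ n : ℤ, n < 0 ∧ ∃ a : A, z = S.D n a}

/-- Generators of `𝔏(A)⁰ = h̄ ⊗ A`. -/
def cartanASet : Set L :=
  {z : L | ∃ h ∈ S.H, ∃ a : A, z = S.E 0 h a} ∪ {z : L | ∃ a : A, z = S.K a}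
    ∪ {z : L | ∃ a : A, z = S.D 0 a} ∪ {z : L | ∃ a : A, z = S.C a}

/-- `𝔏(A)⁰ = h̄ ⊗ A` as a subspace of `L`. -/
def cartanA : Submodule ℂ L := Submodule.span ℂ S.cartanASet

/-- `h ⊗ a`, `h ∈ h̊`, as an element of `h̄ ⊗ A`. -/
def eHA (h : S.H) (a : A) : S.cartanA :=
  ⟨S.E 0 h a, Submodule.subset_span
    (Set.mem_union_left _ (Set.mem_union_left _ (Set.mem_union_left _ ⟨(h : g), h.2, a, rfl⟩)))⟩

/-- `K ⊗ a` as an element of `h̄ ⊗ A`. -/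
def KA (a : A) : S.cartanA :=
  ⟨S.K a, Submodule.subset_span
    (Set.mem_union_left _ (Set.mem_union_left _ (Set.mem_union_right _ ⟨a, rfl⟩)))⟩

/-- `d₀ ⊗ a` as an element of `h̄ ⊗ A`. -/
def DA0 (a : A) : S.cartanA :=
  ⟨S.D 0 a, Submodule.subset_span (Set.mem_union_left _ (Set.mem_union_right _ ⟨a, rfl⟩))⟩

/-- `C ⊗ a` as an element of `h̄ ⊗ A`. -/
def CA (a : A) : S.cartanA :=
  ⟨S.C a, Submodule.subset_span (Set.mem_union_right _ ⟨a, rfl⟩)⟩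

/-- `V` is a highest weight module with highest weight `ψ : h̄ ⊗ A → ℂ` for the natural
triangular decomposition: some nonzero vector `v` is annihilated by `𝔏(A)⁺`, is a
`ψ`-eigenvector for `h̄ ⊗ A`, and generates `V`. -/
def IsHWModule (ψ : Module.Dual ℂ S.cartanA) : Prop :=
  ∃ v : V, v ≠ 0 ∧ (∀ z ∈ S.plusSet, ⁅z, v⁆ = 0) ∧
    (∀ h : S.cartanA, ⁅(h : L), v⁆ = ψ h • v) ∧
    ∀ W : LieSubmodule ℂ L V, v ∈ W → W = ⊤

/-- `(𝔏 ⊗ I) ⬝ V = 0`. -/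
def Annihilates (I : Ideal A) : Prop :=
  ∀ a ∈ I, (∀ (n : ℤ) (x : g) (v : V), ⁅S.E n x a, v⁆ = 0) ∧
    (∀ (n : ℤ) (v : V), ⁅S.D n a, v⁆ = 0) ∧
    (∀ v : V, ⁅S.K a, v⁆ = 0) ∧ (∀ v : V, ⁅S.C a, v⁆ = 0)

/-- `(𝔏₀ ⊗ R)` kills the subspace `X`, where `𝔏₀ = (h̊ ⊗ ℂ[t,t⁻¹] ⊕ ℂK) ⋊ Vir`. -/
def ZeroPartAnnOn (R : Ideal A) (X : Submodule ℂ V) : Prop :=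
  ∀ a ∈ R, ∀ v ∈ X,
    (∀ (n : ℤ) (h : g), h ∈ S.H → ⁅S.E n h a, v⁆ = 0) ∧
    (∀ n : ℤ, ⁅S.D n a, v⁆ = 0) ∧ ⁅S.K a, v⁆ = 0 ∧ ⁅S.C a, v⁆ = 0

/-- Generators of `𝔏(A)₀ = ((h̊ ⊗ ℂ[t,t⁻¹] ⊕ ℂK) ⋊ Vir) ⊗ A`. -/
def zeroPartSet : Set L :=
  {z : L | ∃ (n : ℤ) (h : g), h ∈ S.H ∧ ∃ a : A, z = S.E n h a}
    ∪ {z : L | ∃ a : A, z = S.K a}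
    ∪ {z : L | ∃ (n : ℤ) (a : A), z = S.D n a}
    ∪ {z : L | ∃ a : A, z = S.C a}

/-- Generators of `g(A) = (g̊ ⊗ ℂ[t,t⁻¹] ⊕ ℂK ⊕ ℂd₀) ⊗ A`. -/
def gASet : Set L :=
  {z : L | ∃ (n : ℤ) (x : g) (a : A), z = S.E n x a}
    ∪ {z : L | ∃ a : A, z = S.K a} ∪ {z : L | ∃ a : A, z = S.D 0 a}

/-- Generators of `(h̊ ⊗ ℂ[t,t⁻¹] ⊕ ℂK) ⊗ A`. -/
def heisSet : Set L :=
  {z : L | ∃ (n : ℤ) (h : g), h ∈ S.H ∧ ∃ a : A, z = S.E n h a}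
    ∪ {z : L | ∃ a : A, z = S.K a}

/-- The smallest subspace of `V` containing `X` and stable under the operators in `Ops`;
this models `U(⋯) ⬝ X`. -/
def opClosure (Ops : Set L) (X : Submodule ℂ V) : Submodule ℂ V :=
  sInf {N : Submodule ℂ V | X ≤ N ∧ ∀ z ∈ Ops, ∀ v ∈ N, ⁅z, v⁆ ∈ N}

/-- The reflection `λ ↦ λ - λ(b) • β` on `h̄*`. -/
def reflMap (b : S.cartan) (β : Module.Dual ℂ S.cartan) :
    Module.End ℂ (Module.Dual ℂ S.cartan) :=
  LinearMap.id - LinearMap.smulRight (Module.Dual.eval ℂ S.cartan b) β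

/-- Given `ν⁻¹ : h̊* → h̊` (inverse of the form), the coroot
`β∨ = α∨ + (2 / ⟨α,α⟩) K ∈ h̄` of the real root `β = α + nδ`. -/
def corootOf (nu : Module.Dual ℂ S.H → S.H) (α : Module.Dual ℂ S.H) : S.cartan :=
  (2 / α (nu α)) • (S.eH (nu α) + S.K1)

/-- The (affine) Weyl group `W` of `𝔏(A)`, generated by the reflections in the real
roots `β = α + nδ`, acting on `h̄*`. -/
def weylMonoid (nu : Module.Dual ℂ S.H → S.H)
    (ext : Module.Dual ℂ S.H →ₗ[ℂ] Module.Dual ℂ S.cartan)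
    (δf : Module.Dual ℂ S.cartan) :
    Submonoid (Module.End ℂ (Module.Dual ℂ S.cartan)) :=
  Submonoid.closure {w | ∃ (α : Module.Dual ℂ S.H) (n : ℤ), α ≠ 0 ∧ S.rootSp α ≠ ⊥ ∧
    w = S.reflMap (S.corootOf nu α) (ext α + (n : ℂ) • δf)}

/-- The reflection `σ_α : h ↦ h - α(h) • α∨` on `h̊`. -/
def finReflMap (nu : Module.Dual ℂ S.H → S.H) (α : Module.Dual ℂ S.H) :
    Module.End ℂ S.H :=
  LinearMap.id - LinearMap.smulRight (α : S.H →ₗ[ℂ] ℂ) ((2 / α (nu α)) • nu α)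

/-- The finite Weyl group `W̊` of `g̊`, acting on `h̊`. -/
def finWeyl (nu : Module.Dual ℂ S.H → S.H) : Submonoid (Module.End ℂ S.H) :=
  Submonoid.closure {w | ∃ α : Module.Dual ℂ S.H, α ≠ 0 ∧ S.rootSp α ≠ ⊥ ∧
    w = S.finReflMap nu α}

/-- `ℤ[W̊(θ∨)] ⊆ h̊`: the additive group generated by the `W̊`-orbit of `θ∨`. -/
def thetaOrbitSpan (nu : Module.Dual ℂ S.H → S.H) (θ : Module.Dual ℂ S.H) :
    AddSubgroup S.H :=
  AddSubgroup.closure {h | ∃ w ∈ S.finWeyl nu, h = w ((2 / θ (nu θ)) • nu θ)}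

/-- The `d₀`-eigenspace of `V` for the eigenvalue `μ`. -/
def d0Eig (μ : ℂ) : Submodule ℂ V where
  carrier := {v : V | ⁅S.D 0 1, v⁆ = μ • v}
  add_mem' := by
    intro a b ha hb
    show ⁅S.D 0 1, a + b⁆ = μ • (a + b)
    rw [lie_add, ha, hb, smul_add]
  zero_mem' := by
    show ⁅S.D 0 1, (0 : V)⁆ = μ • (0 : V)
    rw [lie_zero, smul_zero]
  smul_mem' := by
    intro c v hv
    show ⁅S.D 0 1, c • v⁆ = μ • c • v
    rw [lie_smul, hv, smul_comm]

end LoopAffVir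

end

namespace CofiniteIdeal

variable {A : Type*} [CommRing A] [Algebra ℂ A]

lemma cofg_of_span_sup {M : Type*} [AddCommGroup M] [Module ℂ M] {S : Submodule ℂ M}
    {s : Set M} (hs : s.Finite) (h : Submodule.span ℂ s ⊔ S = ⊤) : S.CoFG := by
  refine ⟨?_⟩
  have h1 : (⊤ : Submodule ℂ (M ⧸ S)) = Submodule.map S.mkQ (Submodule.span ℂ s) := by
    have h2 := congrArg (Submodule.map S.mkQ) h
    rw [Submodule.map_sup, Submodule.map_top, Submodule.range_mkQ, Submodule.mkQ_map_self,
      sup_bot_eq] at h2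
    exact h2.symm
  rw [h1]
  exact (Submodule.fg_span hs).map _

lemma exists_finset_span_sup {M : Type*} [AddCommGroup M] [Module ℂ M] {S : Submodule ℂ M}
    (hS : S.CoFG) : ∃ s : Finset M, Submodule.span ℂ (s : Set M) ⊔ S = ⊤ := by
  classical
  obtain ⟨t, ht⟩ := hS.fg_top
  choose f hf using Submodule.mkQ_surjective S
  refine ⟨t.image f, ?_⟩
  have h1 : Submodule.map S.mkQ (Submodule.span ℂ ((t.image f : Finset M) : Set M)) = ⊤ := by
    rw [Submodule.map_span, Finset.coe_image, Set.image_image]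
    simp only [hf, Set.image_id']
    exact ht
  have h2 := congrArg (Submodule.comap S.mkQ) h1
  rw [Submodule.comap_map_mkQ, Submodule.comap_top, sup_comm] at h2
  exact h2

lemma exists_finset_decomp {M : Type*} [AddCommGroup M] [Module ℂ M] {S : Submodule ℂ M}
    (hS : S.CoFG) : ∃ s : Finset M, ∀ T : Submodule ℂ M, (∀ x ∈ s, x ∈ T) → S ≤ T → T = ⊤ := by
  obtain ⟨s, hs⟩ := exists_finset_span_sup hS
  refine ⟨s, fun T h1 h2 => ?_⟩
  rw [eq_top_iff, ← hs]
  exact sup_le (Submodule.span_le.mpr h1) h2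

lemma inf_cofg {I J : Ideal A} (hI : (I.restrictScalars ℂ).CoFG)
    (hJ : (J.restrictScalars ℂ).CoFG) : ((I ⊓ J).restrictScalars ℂ).CoFG := by
  have := hI
  have := hJ
  exact Submodule.CoFG.of_le (S := I.restrictScalars ℂ ⊓ J.restrictScalars ℂ)
    (fun x hx => Ideal.mem_inf.mpr ⟨hx.1, hx.2⟩) (Submodule.CoFG.inf hI hJ)

lemma mul_cofg [IsNoetherianRing A] {I J : Ideal A} (hI : (I.restrictScalars ℂ).CoFG)
    (hJ : (J.restrictScalars ℂ).CoFG) : ((I * J).restrictScalars ℂ).CoFG := by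
  obtain ⟨s, hs⟩ := exists_finset_decomp hI
  obtain ⟨t, ht⟩ := exists_finset_decomp hJ
  obtain ⟨g, hg⟩ := (isNoetherianRing_iff_ideal_fg A).mp inferInstance I
  refine cofg_of_span_sup (s := (s : Set A) ∪ Set.image2 (· * ·) (g : Set A) t)
    (s.finite_toSet.union (Set.Finite.image2 _ g.finite_toSet t.finite_toSet)) ?_
  refine hs _ (fun x hx => Submodule.mem_sup_left (Submodule.subset_span (Or.inl hx))) ?_
  intro x hx
  have hx' : x ∈ Ideal.span (g : Set A) := by rw [hg]; exact hx
  clear hx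
  set T := Submodule.span ℂ ((s : Set A) ∪ Set.image2 (· * ·) (g : Set A) t) ⊔
    (I * J).restrictScalars ℂ with hT
  suffices h : ∀ r : A, x * r ∈ T by simpa using h 1
  induction hx' using Submodule.span_induction with
  | mem x hx =>
    intro r
    have h1 : Submodule.comap (LinearMap.mulLeft ℂ x) T = ⊤ := by
      refine ht _ ?_ ?_
      · intro y hy
        exact Submodule.mem_sup_left (Submodule.subset_span (Or.inr ⟨x, hx, y, hy, rfl⟩))
      · intro y hy
        refine Submodule.mem_sup_right ?_
        refine Ideal.mul_mem_mul ?_ hy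
        rw [← hg]; exact Ideal.subset_span hx
    have h2 : r ∈ Submodule.comap (LinearMap.mulLeft ℂ x) T := by rw [h1]; trivial
    exact h2
  | zero => intro r; rw [zero_mul]; exact T.zero_mem
  | add x y _ _ hx hy => intro r; rw [add_mul]; exact T.add_mem (hx r) (hy r)
  | smul c x _ hx =>
    intro r
    rw [smul_eq_mul, mul_comm c x, mul_assoc]
    exact hx _

lemma pow_cofg [IsNoetherianRing A] {I : Ideal A} (hI : (I.restrictScalars ℂ).CoFG) (n : ℕ) :
    ((I ^ n).restrictScalars ℂ).CoFG := by
  induction n with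
  | zero =>
    rw [pow_zero, Ideal.one_eq_top, Submodule.restrictScalars_top]
    exact Submodule.CoFG.top
  | succ n ih =>
    rw [pow_succ]
    exact mul_cofg ih hI

lemma isCofiniteIdeal {I : Ideal A} (hI : (I.restrictScalars ℂ).CoFG) : IsCofiniteIdeal I := by
  have := hI
  exact Module.Finite.equiv (Submodule.Quotient.restrictScalarsEquiv ℂ I)

lemma pow_eq_pow_of_finrank_le {Q : Type*} [CommRing Q] [Algebra ℂ Q] [FiniteDimensional ℂ Q]
    (J : Ideal Q) {D s : ℕ} (hD : Module.finrank ℂ Q ≤ D) (hs : D ≤ s) : J ^ s = J ^ D := by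
  have key : ∀ n : ℕ, Module.finrank ℂ ((J ^ n).restrictScalars ℂ) + n ≤ D ∨
      J ^ (n + 1) = J ^ n := by
    intro n
    induction n with
    | zero =>
      left
      exact (Submodule.finrank_le _).trans hD
    | succ n ih =>
      by_cases h : J ^ (n + 1) = J ^ n
      · right
        rw [pow_succ, h, ← pow_succ, h]
      · left
        rcases ih with ih | ih
        · have h1 : (J ^ (n + 1)).restrictScalars ℂ < (J ^ n).restrictScalars ℂ := by
            rw [lt_iff_le_and_ne]
            refine ⟨fun x hx => Ideal.pow_le_pow_right (Nat.le_succ n) hx, fun h2 => h ?_⟩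
            exact Submodule.restrictScalars_injective ℂ Q Q h2
          have := Submodule.finrank_lt_finrank_of_lt h1
          omega
        · exact absurd ih h
  have hst : J ^ (D + 1) = J ^ D := by
    rcases key D with h | h
    · have h0 : (J ^ D).restrictScalars ℂ = ⊥ := by
        apply Submodule.finrank_eq_zero.mp
        omega
      have h0' : J ^ D = ⊥ := by
        apply Submodule.restrictScalars_injective ℂ Q Q
        rw [h0]; rfl
      rw [pow_succ, h0', Ideal.bot_mul]
    · exact h
  induction s, hs using Nat.le_induction with
  | base => rfl
  | succ s _ ih => rw [pow_succ, ih, ← pow_succ, hst]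

lemma mem_pow_sup_of_finrank_le {J K : Ideal A} [FiniteDimensional ℂ (A ⧸ K)] {D : ℕ}
    (hD : Module.finrank ℂ (A ⧸ K) ≤ D) (s : ℕ) {a : A} (ha : a ∈ J ^ D) :
    ∃ b ∈ J ^ s, a - b ∈ K := by
  rcases le_total s D with h | h
  · exact ⟨a, Ideal.pow_le_pow_right h ha, by simp⟩
  · have h1 := pow_eq_pow_of_finrank_le (J.map (Ideal.Quotient.mk K)) hD h
    rw [← Ideal.map_pow, ← Ideal.map_pow] at h1
    have h2 := Ideal.mem_map_of_mem (Ideal.Quotient.mk K) ha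
    rw [← h1, Ideal.mem_map_iff_of_surjective _ Ideal.Quotient.mk_surjective] at h2
    obtain ⟨b, hb, hab⟩ := h2
    exact ⟨b, hb, Ideal.Quotient.eq.mp hab.symm⟩

/-- The conductor of a subalgebra of finite codimension is a cofinite ideal. -/
lemma exists_cofg_ideal_le (B : Subalgebra ℂ A) (hB : (Subalgebra.toSubmodule B).CoFG) :
    ∃ I : Ideal A, (I.restrictScalars ℂ).CoFG ∧ ∀ a ∈ I, a ∈ B := by
  classical
  obtain ⟨s, hs⟩ := exists_finset_decomp hB
  refine ⟨{ carrier := {b | ∀ a, b * a ∈ B}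
            add_mem' := ?_, zero_mem' := ?_, smul_mem' := ?_ }, ?_, ?_⟩
  · intro x y hx hy a
    rw [add_mul]; exact B.add_mem (hx a) (hy a)
  · intro a; rw [zero_mul]; exact B.zero_mem
  · intro c x hx a
    rw [smul_eq_mul, mul_comm c x, mul_assoc]; exact hx _
  · have h1 : ∀ f : A, ((Subalgebra.toSubmodule B).comap (LinearMap.mulRight ℂ f)).CoFG := by
      intro f
      have := hB
      have h2 := Submodule.CoFG.ker ((Subalgebra.toSubmodule B).mkQ ∘ₗ LinearMap.mulRight ℂ f)
      rwa [LinearMap.ker_comp, Submodule.ker_mkQ] at h2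
    have h3 := Submodule.CoFG.sInf (s := insert (Subalgebra.toSubmodule B)
      (s.image fun f => (Subalgebra.toSubmodule B).comap (LinearMap.mulRight ℂ f))) (by
        intro S hS
        rw [Finset.mem_insert, Finset.mem_image] at hS
        rcases hS with rfl | ⟨f, _, rfl⟩
        · exact hB
        · exact h1 f)
    refine Submodule.CoFG.of_le ?_ h3
    intro b hb
    rw [Submodule.mem_sInf] at hb
    have hbB : b ∈ B := hb (Subalgebra.toSubmodule B) (by simp)
    have h4 : (Subalgebra.toSubmodule B).comap (LinearMap.mulLeft ℂ b) = ⊤ := by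
      refine hs _ ?_ ?_
      · intro f hf
        exact hb ((Subalgebra.toSubmodule B).comap (LinearMap.mulRight ℂ f))
          (by simpa using Or.inr ⟨f, hf, rfl⟩)
      · intro x hx
        exact B.mul_mem hbB hx
    intro a
    have : a ∈ (Subalgebra.toSubmodule B).comap (LinearMap.mulLeft ℂ b) := by rw [h4]; trivial
    exact this
  · intro a ha
    simpa using ha 1

/-- If the values of `T : M → Hom(X, V)` lie in a finite-dimensional subspace `W` of `V`, then the
kernel of `T` has codimension at most `dim X * dim W`. -/
lemma ker_cofg {M X V : Type*} [AddCommGroup M] [Module ℂ M] [AddCommGroup X] [Module ℂ X]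
    [FiniteDimensional ℂ X] [AddCommGroup V] [Module ℂ V] (T : M →ₗ[ℂ] X →ₗ[ℂ] V)
    (W : Submodule ℂ V) [FiniteDimensional ℂ W] (h : ∀ a x, T a x ∈ W) :
    (LinearMap.ker T).CoFG ∧ Module.finrank ℂ (M ⧸ LinearMap.ker T) ≤
      Module.finrank ℂ X * Module.finrank ℂ W := by
  let T' : M →ₗ[ℂ] X →ₗ[ℂ] W :=
    { toFun := fun a => (T a).codRestrict W (h a)
      map_add' := fun a b => by ext x; simp
      map_smul' := fun c a => by ext x; simp }
  have hker : LinearMap.ker T = LinearMap.ker T' := by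
    ext a
    simp only [LinearMap.mem_ker]
    constructor
    · intro h1; ext x; simp [T', h1]
    · intro h1; ext x
      have := congrArg (fun f => ((f x : W) : V)) h1
      simpa [T'] using this
  rw [hker]
  refine ⟨Submodule.CoFG.ker T', ?_⟩
  rw [(LinearMap.quotKerEquivRange T').finrank_eq, ← Module.finrank_linearMap ℂ ℂ X W]
  exact Submodule.finrank_le _

end CofiniteIdeal

/-- A representation on `V` of the Virasoro algebra with coefficients in `A`. -/
structure VirRep (A V : Type*) [CommRing A] [Algebra ℂ A] [AddCommGroup V] [Module ℂ V] where
  /-- the action of `dₙ ⊗ a` -/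
  d : ℤ → A →ₗ[ℂ] Module.End ℂ V
  /-- the action of `C ⊗ a` -/
  c : A →ₗ[ℂ] Module.End ℂ V
  comm_d : ∀ (n m : ℤ) (a b : A) (v : V),
    d n a (d m b v) = d m b (d n a v) + ((m : ℂ) - n) • d (n + m) (a * b) v
      + (if m = -n then ((n : ℂ) ^ 3 - n) / 12 else 0) • c (a * b) v
  comm_c : ∀ (a : A) (n : ℤ) (b : A) (v : V), c a (d n b v) = d n b (c a v)

namespace VirRep

open CofiniteIdeal

variable {A V : Type*} [CommRing A] [Algebra ℂ A] [AddCommGroup V] [Module ℂ V] (ρ : VirRep A V)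

lemma comm_of_ne {n m : ℤ} (h : m ≠ -n) (a b : A) (v : V) :
    ρ.d n a (ρ.d m b v) = ρ.d m b (ρ.d n a v) + ((m : ℂ) - n) • ρ.d (n + m) (a * b) v := by
  rw [ρ.comm_d, if_neg h, zero_smul, add_zero]

/-- If `dₙ ⊗ a` and `dₘ ⊗ b` commute on `v`, where `n ≠ m` and `n + m ≠ 0`, then
`dₙ₊ₘ ⊗ ab` kills `v`. -/
lemma d_add_eq_zero {n m : ℤ} (hnm : n ≠ m) (h : m ≠ -n ∨ n = 1 ∨ n = -1) {a b : A} {v : V}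
    (h1 : ρ.d n a (ρ.d m b v) = 0) (h2 : ρ.d m b (ρ.d n a v) = 0) :
    ρ.d (n + m) (a * b) v = 0 := by
  have h3 := ρ.comm_d n m a b v
  have hc : (if m = -n then ((n : ℂ) ^ 3 - n) / 12 else 0) = 0 := by
    rcases h with h | rfl | rfl
    · rw [if_neg h]
    · split_ifs <;> norm_num
    · split_ifs <;> norm_num
  rw [h1, h2, hc, zero_smul, add_zero, zero_add] at h3
  have h4 : ((m : ℂ) - n) ≠ 0 := by
    rw [sub_ne_zero]; exact_mod_cast hnm.symm
  exact (smul_eq_zero.mp h3.symm).resolve_left h4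

/-- The largest ideal `I` such that `dⱼ ⊗ I` kills `U`. -/
def ann (U : Submodule ℂ V) (j : ℤ) : Ideal A where
  carrier := {a | ∀ b, ∀ u ∈ U, ρ.d j (a * b) u = 0}
  add_mem' := by
    intro x y hx hy b u hu
    rw [add_mul, map_add, LinearMap.add_apply, hx b u hu, hy b u hu, add_zero]
  zero_mem' := by
    intro b u _
    rw [zero_mul, map_zero, LinearMap.zero_apply]
  smul_mem' := by
    intro r x hx b u hu
    rw [smul_eq_mul, mul_comm r x, mul_assoc]
    exact hx _ u hu

variable {ρ} in
lemma ann_apply {U : Submodule ℂ V} {j : ℤ} {a : A} (h : a ∈ ρ.ann U j) {u : V} (hu : u ∈ U) :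
    ρ.d j a u = 0 := by
  simpa using h 1 u hu

lemma mem_ann {U : Submodule ℂ V} (hU : ∀ a, ∀ u ∈ U, ρ.d 0 a u ∈ U) {j : ℤ} (hj : j ≠ 0) {a : A}
    (h : ∀ u ∈ U, ρ.d j a u = 0) : a ∈ ρ.ann U j := by
  intro b u hu
  rw [mul_comm, ← zero_add j]
  refine ρ.d_add_eq_zero hj.symm (Or.inl (by simpa using hj)) ?_ (h _ (hU b u hu))
  rw [h u hu, map_zero]

lemma ann_cofg {U : Submodule ℂ V} [FiniteDimensional ℂ U] (hU : ∀ a, ∀ u ∈ U, ρ.d 0 a u ∈ U)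
    {j : ℤ} (hj : j ≠ 0) (W : Submodule ℂ V) [FiniteDimensional ℂ W]
    (hW : ∀ a, ∀ u ∈ U, ρ.d j a u ∈ W) :
    ((ρ.ann U j).restrictScalars ℂ).CoFG ∧
      Module.finrank ℂ (A ⧸ ρ.ann U j) ≤ Module.finrank ℂ U * Module.finrank ℂ W := by
  have h1 := ker_cofg (LinearMap.lcomp ℂ V U.subtype ∘ₗ ρ.d j) W (fun a u => hW a u u.2)
  have h2 : LinearMap.ker (LinearMap.lcomp ℂ V U.subtype ∘ₗ ρ.d j) =
      (ρ.ann U j).restrictScalars ℂ := by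
    ext a
    rw [LinearMap.mem_ker, Submodule.restrictScalars_mem]
    constructor
    · intro h
      exact ρ.mem_ann hU hj fun u hu => LinearMap.congr_fun h ⟨u, hu⟩
    · intro h
      ext u
      exact ann_apply h u.2
  rw [h2] at h1
  refine ⟨h1.1, ?_⟩
  rw [← (Submodule.Quotient.restrictScalarsEquiv ℂ (ρ.ann U j)).finrank_eq]
  exact h1.2

lemma ann_mul {U : Submodule ℂ V} {n m : ℤ} (hnm : n ≠ m) (h : m ≠ -n ∨ n = 1 ∨ n = -1) :
    ρ.ann U n * ρ.ann U m ≤ ρ.ann U (n + m) := by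
  rw [Ideal.mul_le]
  intro a ha b hb r u hu
  rw [mul_assoc]
  refine ρ.d_add_eq_zero hnm h ?_ ?_
  · rw [hb r u hu, map_zero]
  · rw [ann_apply ha hu, map_zero]

lemma ann_pow_mul {U : Submodule ℂ V} (s : ℕ) :
    (ρ.ann U 1 ⊓ ρ.ann U (-1)) ^ s * ρ.ann U 2 ≤ ρ.ann U (2 + s) ∧
    (ρ.ann U 1 ⊓ ρ.ann U (-1)) ^ s * ρ.ann U (-2) ≤ ρ.ann U (-2 - s) := by
  induction s with
  | zero => simp
  | succ s ih =>
    rw [pow_succ', mul_assoc, mul_assoc]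
    constructor
    · refine (Ideal.mul_mono inf_le_left ih.1).trans ?_
      refine (ρ.ann_mul (by omega) (Or.inr (Or.inl rfl))).trans (le_of_eq ?_)
      congr 1; push_cast; ring
    · refine (Ideal.mul_mono inf_le_right ih.2).trans ?_
      refine (ρ.ann_mul (by omega) (Or.inr (Or.inr rfl))).trans (le_of_eq ?_)
      congr 1; push_cast; ring

theorem exists_ideal_of_bounded [IsNoetherianRing A] (U : Submodule ℂ V) [FiniteDimensional ℂ U]
    (hU : ∀ a, ∀ u ∈ U, ρ.d 0 a u ∈ U) (W : ℤ → Submodule ℂ V) [∀ j, FiniteDimensional ℂ (W j)]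
    {B : ℕ} (hB : ∀ j, Module.finrank ℂ (W j) ≤ B) (hW : ∀ j a, ∀ u ∈ U, ρ.d j a u ∈ W j) :
    ∃ I : Ideal A, (I.restrictScalars ℂ).CoFG ∧ ∀ a ∈ I, ∀ j, ∀ u ∈ U, ρ.d j a u = 0 := by
  set J := ρ.ann U 1 ⊓ ρ.ann U (-1) with hJ
  set D := Module.finrank ℂ U * B with hD
  have hc : ∀ j ≠ 0, ((ρ.ann U j).restrictScalars ℂ).CoFG ∧
      Module.finrank ℂ (A ⧸ ρ.ann U j) ≤ D := by
    intro j hj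
    obtain ⟨h1, h2⟩ := ρ.ann_cofg hU hj (W j) (hW j)
    exact ⟨h1, h2.trans (Nat.mul_le_mul_left _ (hB j))⟩
  have hJc : (J.restrictScalars ℂ).CoFG := inf_cofg (hc 1 one_ne_zero).1 (hc (-1) (by norm_num)).1
  have hfd : ∀ j ≠ 0, FiniteDimensional ℂ (A ⧸ ρ.ann U j) := by
    intro j hj
    exact isCofiniteIdeal (hc j hj).1
  have hmem : ∀ (k : ℤ) (j : ℤ), j ≠ 0 → (∀ s : ℕ, (s : ℤ) = |j| - 2 →
      J ^ s * ρ.ann U k ≤ ρ.ann U j) → 2 ≤ |j| → J ^ D * ρ.ann U k ≤ ρ.ann U j := by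
    intro k j hj h h2
    have := hfd j hj
    rw [Ideal.mul_le]
    intro a ha b hb
    obtain ⟨a', ha', haa⟩ := mem_pow_sup_of_finrank_le (hc j hj).2 (|j| - 2).toNat ha
    have h3 := h (|j| - 2).toNat (by omega) (Ideal.mul_mem_mul ha' hb)
    have h4 := (ρ.ann U j).mul_mem_right b haa
    have h5 := (ρ.ann U j).add_mem h4 h3
    rwa [← add_mul, sub_add_cancel] at h5
  refine ⟨(J ^ D * ρ.ann U 2) ⊓ (J ^ D * ρ.ann U (-2)) ⊓ (J * J), ?_, ?_⟩
  · exact inf_cofg (inf_cofg (mul_cofg (pow_cofg hJc _) (hc 2 (by norm_num)).1)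
      (mul_cofg (pow_cofg hJc _) (hc (-2) (by norm_num)).1)) (mul_cofg hJc hJc)
  · intro a ha j u hu
    obtain ⟨ha', ha3⟩ := Ideal.mem_inf.mp ha
    obtain ⟨ha1, ha2⟩ := Ideal.mem_inf.mp ha'
    suffices h : a ∈ ρ.ann U j from ann_apply h hu
    have h0 : j ≤ -2 ∨ j = -1 ∨ j = 0 ∨ j = 1 ∨ 2 ≤ j := by omega
    rcases h0 with h | rfl | rfl | rfl | h
    · refine hmem (-2) j (by omega) (fun s hs => ?_) (by rw [abs_of_neg (by omega)]; omega) ha2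
      rw [abs_of_neg (by omega)] at hs
      obtain rfl : j = -2 - s := by omega
      exact (ρ.ann_pow_mul s).2
    · exact (Ideal.mem_inf.mp (Ideal.mul_le_left ha3)).2
    · exact (Ideal.mul_mono inf_le_left inf_le_right).trans
        (ρ.ann_mul (by norm_num) (Or.inr (Or.inl rfl))) ha3
    · exact (Ideal.mem_inf.mp (Ideal.mul_le_left ha3)).1
    · refine hmem 2 j (by omega) (fun s hs => ?_) (by rw [abs_of_pos (by omega)]; omega) ha1
      rw [abs_of_pos (by omega)] at hs
      obtain rfl : j = 2 + s := by omega
      exact (ρ.ann_pow_mul s).1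

end VirRep

namespace VirRep

open CofiniteIdeal

variable {A V : Type*} [CommRing A] [Algebra ℂ A] [AddCommGroup V] [Module ℂ V] (ρ : VirRep A V)

/-- The eigenspaces of `d₀`. -/
def wt (μ : ℂ) : Submodule ℂ V := Module.End.eigenspace (ρ.d 0 1) μ

/-- Every submodule is trivial. -/
def Irreducible : Prop :=
  ∀ W : Submodule ℂ V, (∀ n a, ∀ w ∈ W, ρ.d n a w ∈ W) → W = ⊥ ∨ W = ⊤

variable {ρ}

lemma mem_wt {μ : ℂ} {v : V} : v ∈ ρ.wt μ ↔ ρ.d 0 1 v = μ • v := Module.End.mem_eigenspace_iff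

lemma d_zero_d (m : ℤ) (a b : A) (v : V) :
    ρ.d 0 a (ρ.d m b v) = ρ.d m b (ρ.d 0 a v) + (m : ℂ) • ρ.d m (a * b) v := by
  simp [ρ.comm_d 0 m a b v]

lemma d_mem_wt {μ : ℂ} {v : V} (hv : v ∈ ρ.wt μ) (n : ℤ) (a : A) :
    ρ.d n a v ∈ ρ.wt (μ + n) := by
  rw [mem_wt] at hv ⊢
  rw [d_zero_d, hv, map_smul, one_mul, add_smul]

lemma c_mem_wt {μ : ℂ} {v : V} (hv : v ∈ ρ.wt μ) (a : A) : ρ.c a v ∈ ρ.wt μ := by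
  rw [mem_wt] at hv ⊢
  rw [← ρ.comm_c, hv, map_smul]

lemma Irreducible.eq_top (hρ : ρ.Irreducible) {W : Submodule ℂ V}
    (hW : ∀ n a, ∀ w ∈ W, ρ.d n a w ∈ W) {w : V} (hw : w ∈ W) (hw0 : w ≠ 0) : W = ⊤ := by
  refine (hρ W hW).resolve_left ?_
  rintro rfl
  exact hw0 hw

/-- The elements `a` such that `dₘ ⊗ a` kills `v` for all large `m`. -/
def ev (v : V) : Submodule ℂ A where
  carrier := {a | ∃ N : ℤ, ∀ m ≥ N, ρ.d m a v = 0}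
  add_mem' := by
    rintro a b ⟨N, hN⟩ ⟨M, hM⟩
    refine ⟨max N M, fun m hm => ?_⟩
    rw [map_add, LinearMap.add_apply, hN m (le_of_max_le_left hm), hM m (le_of_max_le_right hm),
      add_zero]
  zero_mem' := ⟨0, fun m _ => by rw [map_zero, LinearMap.zero_apply]⟩
  smul_mem' := by
    rintro c a ⟨N, hN⟩
    exact ⟨N, fun m hm => by rw [map_smul, LinearMap.smul_apply, hN m hm, smul_zero]⟩

lemma mul_mem_ev {v : V} {a b : A} (ha : a ∈ ρ.ev v) (hb : b ∈ ρ.ev v) : a * b ∈ ρ.ev v := by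
  obtain ⟨N, hN⟩ := ha
  obtain ⟨M, hM⟩ := hb
  set k := max (max N M) 1 with hk
  refine ⟨2 * k + 1, fun m hm => ?_⟩
  have h := ρ.d_add_eq_zero (n := k) (m := m - k) (a := a) (b := b) (v := v)
    (by omega) (Or.inl (by omega)) (by rw [hM _ (by omega), map_zero])
    (by rw [hN _ (by omega), map_zero])
  rwa [add_sub_cancel] at h

variable (ρ) in
/-- The kernel of `a ↦ (d₁ ⊗ a) v`. -/
def kerOne (v : V) : Submodule ℂ A := LinearMap.ker (LinearMap.applyₗ v ∘ₗ ρ.d 1)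

lemma kerOne_cofg {μ : ℂ} (hμ : FiniteDimensional ℂ (ρ.wt (μ + 1))) {v : V} (hv : v ∈ ρ.wt μ) :
    (ρ.kerOne v).CoFG := by
  have h : ∀ a, (LinearMap.applyₗ v ∘ₗ ρ.d 1) a ∈ ρ.wt (μ + 1) := by
    intro a
    simpa using d_mem_wt hv 1 a
  have h1 := Submodule.CoFG.ker (LinearMap.codRestrict _ _ h)
  rwa [LinearMap.ker_codRestrict] at h1

lemma d_eq_zero_of_mem_kerOne {v : V} {N : ℤ} (hN : ∀ m ≥ N, ρ.d m 1 v = 0) {a : A}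
    (ha : a ∈ ρ.kerOne v) {m : ℤ} (hm : N + 1 ≤ m) (hm' : 3 ≤ m) : ρ.d m a v = 0 := by
  have ha' : ρ.d 1 a v = 0 := ha
  have h := ρ.d_add_eq_zero (n := m - 1) (m := 1) (a := 1) (b := a) (v := v)
    (by omega) (Or.inl (by omega)) (by rw [ha', map_zero]) (by rw [hN _ (by omega), map_zero])
  rwa [sub_add_cancel, one_mul] at h

lemma exists_cofg_ideal_le_ev {μ : ℂ} (hμ : FiniteDimensional ℂ (ρ.wt (μ + 1))) {v : V}
    (hv : v ∈ ρ.wt μ) (h1 : 1 ∈ ρ.ev v) :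
    ∃ I : Ideal A, (I.restrictScalars ℂ).CoFG ∧ ∀ a ∈ I, a ∈ ρ.ev v := by
  let B : Subalgebra ℂ A := (ρ.ev v).toSubalgebra h1 fun _ _ => mul_mem_ev
  refine exists_cofg_ideal_le B (Submodule.CoFG.of_le ?_ (kerOne_cofg hμ hv))
  intro a ha
  obtain ⟨N, hN⟩ := h1
  exact ⟨max (N + 1) 3, fun m hm => d_eq_zero_of_mem_kerOne hN ha (le_of_max_le_left hm)
    (le_of_max_le_right hm)⟩

lemma d_d_eq_zero {w : V} {m n : ℤ} (hmn : m ≠ -n) {a b : A} (h1 : ρ.d m a w = 0)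
    (h2 : ρ.d (m + n) (a * b) w = 0) : ρ.d m a (ρ.d n b w) = 0 := by
  rw [ρ.comm_of_ne (by omega), h1, h2, map_zero, smul_zero, add_zero]

lemma Irreducible.mem_ev_of_ideal (hρ : ρ.Irreducible) (I : Ideal A) {v : V} (hv0 : v ≠ 0)
    (hv : ∀ a ∈ I, a ∈ ρ.ev v) (w : V) : ∀ a ∈ I, a ∈ ρ.ev w := by
  let S : Submodule ℂ V :=
    { carrier := {w | ∀ a ∈ I, a ∈ ρ.ev w}
      add_mem' := by
        intro x y hx hy a ha
        obtain ⟨N, hN⟩ := hx a ha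
        obtain ⟨M, hM⟩ := hy a ha
        exact ⟨max N M, fun m hm => by
          rw [map_add, hN m (le_of_max_le_left hm), hM m (le_of_max_le_right hm), add_zero]⟩
      zero_mem' := fun a _ => ⟨0, fun m _ => map_zero _⟩
      smul_mem' := by
        intro c x hx a ha
        obtain ⟨N, hN⟩ := hx a ha
        exact ⟨N, fun m hm => by rw [map_smul, hN m hm, smul_zero]⟩ }
  have hS : S = ⊤ := by
    refine hρ.eq_top (fun n b w hw a ha => ?_) hv hv0
    obtain ⟨N, hN⟩ := hw a ha
    obtain ⟨M, hM⟩ := hw (a * b) (I.mul_mem_right b ha)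
    refine ⟨max (max N (M - n)) (1 - n), fun m hm => ?_⟩
    exact d_d_eq_zero (by omega) (hN m (by omega)) (hM _ (by omega))
  have : w ∈ S := by rw [hS]; trivial
  exact this

variable (ρ) in
/-- The vectors killed by all `dₘ ⊗ a` with `m ≥ N`. -/
def killed (N : ℤ) : Submodule ℂ V where
  carrier := {w | ∀ m ≥ N, ∀ a, ρ.d m a w = 0}
  add_mem' := by
    intro x y hx hy m hm a
    rw [map_add, hx m hm a, hy m hm a, add_zero]
  zero_mem' := fun m _ a => map_zero _
  smul_mem' := by
    intro c x hx m hm a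
    rw [map_smul, hx m hm a, smul_zero]

lemma killed_mono {N M : ℤ} (h : N ≤ M) : ρ.killed N ≤ ρ.killed M :=
  fun _ hw m hm a => hw m (h.trans hm) a

lemma d_mem_killed {N n : ℤ} {w : V} (hw : w ∈ ρ.killed N) (b : A) {M : ℤ} (h1 : N ≤ M)
    (h2 : N ≤ M + n) (h3 : 1 ≤ M + n) : ρ.d n b w ∈ ρ.killed M := fun m hm a =>
  d_d_eq_zero (by omega) (hw m (by omega) a) (hw (m + n) (by omega) _)

lemma Irreducible.exists_mem_killed (hρ : ρ.Irreducible) {N : ℤ} {v : V} (hv0 : v ≠ 0)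
    (hv : v ∈ ρ.killed N) (w : V) : ∃ M, w ∈ ρ.killed M := by
  have hdir : Directed (· ≤ ·) ρ.killed := Monotone.directed_le fun _ _ h => killed_mono h
  have hS : ⨆ M, ρ.killed M = ⊤ := by
    refine hρ.eq_top (fun n b w hw => ?_) (Submodule.mem_iSup_of_mem N hv) hv0
    obtain ⟨M, hM⟩ := (Submodule.mem_iSup_of_directed _ hdir).mp hw
    exact Submodule.mem_iSup_of_mem (max (max M (M - n)) (1 - n))
      (d_mem_killed hM b (by omega) (by omega) (by omega))
  have : w ∈ ⨆ M, ρ.killed M := by rw [hS]; trivial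
  exact (Submodule.mem_iSup_of_directed _ hdir).mp this

lemma exists_le_killed (h : ∀ w, ∃ M, w ∈ ρ.killed M) (U : Submodule ℂ V)
    [FiniteDimensional ℂ U] : ∃ M, U ≤ ρ.killed M := by
  classical
  obtain ⟨t, ht⟩ := (Submodule.fg_iff_finiteDimensional U).mpr inferInstance
  choose f hf using h
  obtain ⟨M, hM⟩ := Finset.exists_le (t.image f)
  refine ⟨M, ?_⟩
  rw [← ht, Submodule.span_le]
  intro w hw
  exact killed_mono (hM _ (Finset.mem_image_of_mem f hw)) (hf w)

/-- A vector killed by `dₙ ⊗ 1` and `dₙ₊₁ ⊗ 1` is killed by `dₘ ⊗ 1` for all large `m`. -/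
lemma one_mem_ev {n : ℕ} (hn : 1 ≤ n) {v : V} (h1 : ρ.d n 1 v = 0) (h2 : ρ.d (n + 1) 1 v = 0) :
    1 ∈ ρ.ev v := by
  have hadd : ∀ i j : ℤ, 0 < i → 0 < j → i ≠ j → ρ.d i 1 v = 0 → ρ.d j 1 v = 0 →
      ρ.d (i + j) 1 v = 0 := by
    intro i j hi hj hij h h'
    have h3 := ρ.d_add_eq_zero (a := 1) (b := 1) (v := v) hij (Or.inl (by omega))
      (by rw [h', map_zero]) (by rw [h, map_zero])
    rwa [one_mul] at h3
  have hq : ∀ q : ℕ, ρ.d (n + q * (n + 1)) 1 v = 0 := by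
    intro q
    induction q with
    | zero => simpa using h1
    | succ q ih =>
      have hne : (n : ℤ) + q * (n + 1) ≠ n + 1 := by
        rcases q with _ | q
        · simp
        · push_cast; nlinarith
      have h3 := hadd _ _ (by positivity) (by positivity) hne ih h2
      rwa [show (n : ℤ) + q * (n + 1) + (n + 1) = n + (q + 1 : ℕ) * (n + 1) by push_cast; ring] at h3
  have hp : ∀ p q : ℕ, 1 ≤ q → ρ.d ((p + 1) * n + q * (n + 1)) 1 v = 0 := by
    intro p q hq1
    induction p with
    | zero => simpa using hq q
    | succ p ih =>
      have hne : ((p : ℤ) + 1) * n + q * (n + 1) ≠ n := by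
        have : (1 : ℤ) ≤ q := by exact_mod_cast hq1
        have : (0 : ℤ) ≤ p * n := by positivity
        nlinarith
      have h3 := hadd _ _ (by positivity) (by positivity) hne ih h1
      rwa [show ((p : ℤ) + 1) * n + q * (n + 1) + n = ((p + 1 : ℕ) + 1) * n + q * (n + 1) by
        push_cast; ring] at h3
  refine ⟨n * (n + 1) + 1, fun m hm => ?_⟩
  have hn' : (1 : ℤ) ≤ n := by exact_mod_cast hn
  have ht : (n : ℤ) + 1 ≤ (m - 1) / n := by
    rw [Int.le_ediv_iff_mul_le (by omega)]; nlinarith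
  have hr0 := Int.emod_nonneg (m - 1) (b := (n : ℤ)) (by omega)
  have hr1 := Int.emod_lt_of_pos (m - 1) (b := (n : ℤ)) (by omega)
  have hdm := Int.mul_ediv_add_emod (m - 1) n
  set t := (m - 1) / n
  set r := (m - 1) % n
  have h3 := hp (t - r - 2).toNat (r + 1).toNat (by omega)
  rw [Int.toNat_of_nonneg (by omega), Int.toNat_of_nonneg (by omega)] at h3
  rwa [show (t - r - 2 + 1) * n + (r + 1) * (n + 1) = m by linarith] at h3

lemma exists_ne_zero_of_unbounded {μ : ℂ} (hfd : ∀ j : ℤ, FiniteDimensional ℂ (ρ.wt (μ + j)))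
    (hunb : ∀ B : ℕ, ∃ n : ℕ, 1 ≤ n ∧ B < Module.finrank ℂ (ρ.wt (μ - n))) (F : Finset A) :
    ∃ n : ℕ, 1 ≤ n ∧ ∃ v ∈ ρ.wt (μ - n), v ≠ 0 ∧ ∀ f ∈ F, ρ.d n f v = 0 ∧ ρ.d (n + 1) f v = 0 := by
  have hfd' : ∀ (j : ℤ) (ν : ℂ), ν = μ + j → FiniteDimensional ℂ (ρ.wt ν) := by
    rintro j ν rfl
    exact hfd j
  have hfd0 : FiniteDimensional ℂ (ρ.wt μ) := hfd' 0 _ (by simp)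
  have hfd1 : FiniteDimensional ℂ (ρ.wt (μ + 1)) := hfd' 1 _ (by simp)
  obtain ⟨n, hn, hB⟩ := hunb
    (F.card * (Module.finrank ℂ (ρ.wt μ) + Module.finrank ℂ (ρ.wt (μ + 1))))
  have hfdn : FiniteDimensional ℂ (ρ.wt (μ - n)) := hfd' (-n) _ (by push_cast; ring)
  have h0 : ∀ f, ∀ v ∈ ρ.wt (μ - n), ρ.d n f v ∈ ρ.wt μ := by
    intro f v hv
    simpa using d_mem_wt hv n f
  have h1 : ∀ f, ∀ v ∈ ρ.wt (μ - n), ρ.d (n + 1) f v ∈ ρ.wt (μ + 1) := by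
    intro f v hv
    have h := d_mem_wt hv (n + 1) f
    rwa [show μ - n + ((n + 1 : ℤ) : ℂ) = μ + 1 by push_cast; ring] at h
  let T : ρ.wt (μ - n) →ₗ[ℂ] (F → ρ.wt μ × ρ.wt (μ + 1)) :=
    LinearMap.pi fun f => ((ρ.d n f).restrict (h0 f)).prod ((ρ.d (n + 1) f).restrict (h1 f))
  have hT : LinearMap.ker T ≠ ⊥ := by
    apply LinearMap.ker_ne_bot_of_finrank_lt
    rw [Module.finrank_pi_fintype]
    simpa using hB
  obtain ⟨v, hv, hv0⟩ := (Submodule.ne_bot_iff _).mp hT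
  refine ⟨n, hn, v, v.2, by simpa using hv0, fun f hf => ?_⟩
  have h2 := congrFun (LinearMap.mem_ker.mp hv) ⟨f, hf⟩
  have h3 := congrArg (fun z => (z.1 : V)) h2
  have h4 := congrArg (fun z => (z.2 : V)) h2
  exact ⟨h3, h4⟩

theorem Irreducible.exists_killed_of_unbounded (hρ : ρ.Irreducible) {μ : ℂ}
    (hfd : ∀ j : ℤ, FiniteDimensional ℂ (ρ.wt (μ + j)))
    (hunb : ∀ B : ℕ, ∃ n : ℕ, 1 ≤ n ∧ B < Module.finrank ℂ (ρ.wt (μ - n))) :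
    ∃ j : ℤ, ∃ v ∈ ρ.wt (μ + j), v ≠ 0 ∧ ∃ N, v ∈ ρ.killed N := by
  classical
  have hfd' : ∀ n : ℕ, FiniteDimensional ℂ (ρ.wt (μ - n + 1)) := by
    intro n
    have h := hfd (-n + 1)
    rwa [show μ + ((-n + 1 : ℤ) : ℂ) = μ - n + 1 by push_cast; ring] at h
  obtain ⟨n, hn, v, hv, hv0, hvF⟩ := exists_ne_zero_of_unbounded hfd hunb {1}
  have hv1 := hvF 1 (by simp)
  obtain ⟨I, hI, hIv⟩ := exists_cofg_ideal_le_ev (hfd' n) hv (one_mem_ev hn hv1.1 hv1.2)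
  obtain ⟨F, hF⟩ := exists_finset_decomp hI
  obtain ⟨k, hk, u, hu, hu0, huF⟩ := exists_ne_zero_of_unbounded hfd hunb (insert 1 F)
  have hu1 := huF 1 (by simp)
  have hev1 := one_mem_ev hk hu1.1 hu1.2
  have hev : ρ.ev u = ⊤ := by
    refine hF _ (fun f hf => ?_) (hρ.mem_ev_of_ideal I hv0 hIv u)
    obtain ⟨N, hN⟩ := hev1
    have hfu := (huF f (by simp [hf])).1
    refine ⟨N + k + 2 * k + 1 + |N|, fun m hm => ?_⟩
    have h := ρ.d_add_eq_zero (n := m - k) (m := k) (a := 1) (b := f) (v := u)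
      (by have := neg_abs_le N; omega) (Or.inl (by have := neg_abs_le N; omega))
      (by rw [hfu, map_zero]) (by rw [hN _ (by have := abs_nonneg N; omega), map_zero])
    rwa [sub_add_cancel, one_mul] at h
  obtain ⟨G, hG⟩ := exists_finset_decomp (kerOne_cofg (hfd' k) hu)
  have hev' : ∀ a, ∃ N : ℤ, ∀ m ≥ N, ρ.d m a u = 0 := fun a => by
    have : a ∈ ρ.ev u := by rw [hev]; trivial
    exact this
  choose f hf using hev'
  obtain ⟨M, hM⟩ := Finset.exists_le (G.image f)
  refine ⟨-k, u, by simpa [sub_eq_add_neg] using hu, hu0, max M (max (f 1 + 1) 3), fun m hm a => ?_⟩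
  have htop : LinearMap.ker (LinearMap.applyₗ u ∘ₗ ρ.d m) = ⊤ := by
    refine hG _ (fun x hx => ?_) (fun x hx => ?_)
    · exact hf x m (by have := hM _ (Finset.mem_image_of_mem f hx); omega)
    · exact d_eq_zero_of_mem_kerOne (hf 1) hx (by omega) (by omega)
  have : a ∈ LinearMap.ker (LinearMap.applyₗ u ∘ₗ ρ.d m) := by rw [htop]; trivial
  exact this

end VirRep

namespace VirRep

open CofiniteIdeal

variable {A V : Type*} [CommRing A] [Algebra ℂ A] [AddCommGroup V] [Module ℂ V] {ρ : VirRep A V}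

lemma Irreducible.eq_zero_of_singular (hρ : ρ.Irreducible) {ν : ℂ} (hν : ρ.wt ν ≠ ⊥) {n : ℕ}
    (hn : 1 ≤ n) {y : V} (hy : y ∈ ρ.wt (ν - n)) (hsing : y ∈ ρ.killed 1) : y = 0 := by
  let P : Set (Submodule ℂ V) := {W | y ∈ W ∧ (∀ i ≤ 0, ∀ a, ∀ w ∈ W, ρ.d i a w ∈ W) ∧
    ∀ a, ∀ w ∈ W, ρ.c a w ∈ W}
  set Y : Submodule ℂ V := sInf P with hYdef
  have hyY : y ∈ Y := Submodule.mem_sInf.mpr fun W hW => hW.1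
  have hYd : ∀ i ≤ 0, ∀ a, ∀ w ∈ Y, ρ.d i a w ∈ Y := fun i hi a w hw =>
    Submodule.mem_sInf.mpr fun W hW => hW.2.1 i hi a w (Submodule.mem_sInf.mp hw W hW)
  have hYc : ∀ a, ∀ w ∈ Y, ρ.c a w ∈ Y := fun a w hw =>
    Submodule.mem_sInf.mpr fun W hW => hW.2.2 a w (Submodule.mem_sInf.mp hw W hW)
  let Z : Submodule ℂ V :=
    { carrier := {z | z ∈ Y ∧ ∀ j ≥ 1, ∀ b, ρ.d j b z ∈ Y}
      add_mem' := fun {u w} hu hw => ⟨Y.add_mem hu.1 hw.1, fun j hj b => by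
        rw [map_add]; exact Y.add_mem (hu.2 j hj b) (hw.2 j hj b)⟩
      zero_mem' := ⟨Y.zero_mem, fun j _ b => by rw [map_zero]; exact Y.zero_mem⟩
      smul_mem' := fun c w hw => ⟨Y.smul_mem c hw.1, fun j hj b => by
        rw [map_smul]; exact Y.smul_mem c (hw.2 j hj b)⟩ }
  have hYZ : Y ≤ Z := by
    refine sInf_le ⟨⟨hyY, fun j hj b => ?_⟩, fun i hi a w hw => ⟨hYd i hi a w hw.1, ?_⟩,
      fun a w hw => ⟨hYc a w hw.1, fun j hj b => ?_⟩⟩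
    · rw [hsing j hj b]; exact Y.zero_mem
    · intro j hj b
      rw [ρ.comm_d]
      refine Y.add_mem (Y.add_mem (hYd i hi a _ (hw.2 j hj b)) (Y.smul_mem _ ?_))
        (Y.smul_mem _ (hYc _ _ hw.1))
      rcases lt_or_ge 0 (j + i) with h | h
      · exact hw.2 _ (by omega) _
      · exact hYd _ h _ _ hw.1
    · rw [← ρ.comm_c]; exact hYc _ _ (hw.2 j hj b)
  have hstab : ∀ i a, ∀ w ∈ Y, ρ.d i a w ∈ Y := by
    intro i a w hw
    rcases lt_or_ge 0 i with h | h
    · exact (hYZ hw).2 i (by omega) a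
    · exact hYd i h a w hw
  have hYlow : Y ≤ ⨆ μ : ℂ, ⨆ _ : μ ≠ ν, ρ.wt μ := by
    have h1 : Y ≤ ⨆ k : ℕ, ρ.wt (ν - n - k) := by
      refine sInf_le ⟨Submodule.mem_iSup_of_mem 0 (by simpa using hy), fun i hi a => ?_,
        fun a => ?_⟩
      · suffices h : ⨆ k : ℕ, ρ.wt (ν - n - k) ≤
            Submodule.comap (ρ.d i a) (⨆ k : ℕ, ρ.wt (ν - n - k)) from fun w hw => h hw
        obtain ⟨m, rfl⟩ : ∃ m : ℕ, i = -m := ⟨i.natAbs, by omega⟩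
        refine iSup_le fun k w hw => Submodule.mem_iSup_of_mem (k + m) ?_
        have h := d_mem_wt hw (-m) a
        rwa [show ν - n - k + ((-m : ℤ) : ℂ) = ν - n - ((k + m : ℕ) : ℂ) by push_cast; ring] at h
      · suffices h : ⨆ k : ℕ, ρ.wt (ν - n - k) ≤
            Submodule.comap (ρ.c a) (⨆ k : ℕ, ρ.wt (ν - n - k)) from fun w hw => h hw
        exact iSup_le fun k w hw => Submodule.mem_iSup_of_mem k (c_mem_wt hw a)
    refine h1.trans (iSup_le fun k => ?_)
    refine le_iSup₂_of_le (ν - n - k) ?_ le_rfl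
    intro h2
    have h3 : ((n + k : ℕ) : ℂ) = 0 := by push_cast; linear_combination -h2
    rw [Nat.cast_eq_zero] at h3
    omega
  have hdisj := Module.End.eigenspaces_iSupIndep (ρ.d 0 1) ν
  rcases hρ Y hstab with h | h
  · rw [h] at hyY; exact hyY
  · exfalso
    apply hν
    rw [← disjoint_self]
    refine hdisj.mono_right ?_
    rw [h] at hYlow
    exact le_top.trans hYlow

theorem Irreducible.exists_ideal_of_singular [IsNoetherianRing A] (hρ : ρ.Irreducible) {ν : ℂ}
    (hfd : ∀ n : ℕ, FiniteDimensional ℂ (ρ.wt (ν - n))) {v : V} (hv : v ∈ ρ.wt ν) (hv0 : v ≠ 0)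
    (hsing : v ∈ ρ.killed 1) :
    ∃ I : Ideal A, (I.restrictScalars ℂ).CoFG ∧ ∀ a ∈ I, ∀ j, ρ.d j a v = 0 := by
  set X := ρ.wt ν ⊓ ρ.killed 1 with hX
  have hfd0 : FiniteDimensional ℂ (ρ.wt ν) := by
    have h := hfd 0
    rwa [Nat.cast_zero, sub_zero] at h
  have hXfd : FiniteDimensional ℂ X := Submodule.finiteDimensional_inf_left _ _
  have hX0 : ∀ a, ∀ u ∈ X, ρ.d 0 a u ∈ X := by
    intro a u hu
    refine ⟨?_, d_mem_killed hu.2 a le_rfl (by simp) (by simp)⟩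
    simpa using d_mem_wt hu.1 0 a
  have hc : ∀ n : ℕ, 1 ≤ n → ((ρ.ann X (-n)).restrictScalars ℂ).CoFG := by
    intro n hn
    have := hfd n
    refine (ρ.ann_cofg hX0 (by omega) (ρ.wt (ν - n)) fun a u hu => ?_).1
    have h := d_mem_wt hu.1 (-n) a
    rwa [show ν + ((-n : ℤ) : ℂ) = ν - n by push_cast; ring] at h
  refine ⟨ρ.ann X (-1) ⊓ ρ.ann X (-2), inf_cofg (hc 1 le_rfl) (hc 2 (by norm_num)), ?_⟩
  have h1 : ∀ a ∈ ρ.ann X (-1) ⊓ ρ.ann X (-2), ∀ u ∈ X, ρ.d (-1) a u = 0 := fun a ha u hu =>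
    ann_apply (Ideal.mem_inf.mp ha).1 hu
  have h2 : ∀ a ∈ ρ.ann X (-1) ⊓ ρ.ann X (-2), ∀ u ∈ X, ρ.d (-2) a u = 0 := fun a ha u hu =>
    ann_apply (Ideal.mem_inf.mp ha).2 hu
  have h0 : ∀ a ∈ ρ.ann X (-1) ⊓ ρ.ann X (-2), ∀ u ∈ X, ρ.d 0 a u = 0 := by
    intro a ha u hu
    have h := ρ.d_add_eq_zero (n := 1) (m := -1) (a := 1) (b := a) (v := u) (by norm_num)
      (Or.inr (Or.inl rfl)) (by rw [h1 a ha u hu, map_zero])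
      (by rw [hu.2 1 le_rfl, map_zero])
    rwa [one_mul] at h
  have hcen : ∀ a ∈ ρ.ann X (-1) ⊓ ρ.ann X (-2), ∀ u ∈ X, ρ.c a u = 0 := by
    intro a ha u hu
    have h := ρ.comm_d 2 (-2) 1 a u
    rw [h2 a ha u hu, hu.2 2 (by norm_num), one_mul, map_zero, map_zero, add_neg_cancel,
      h0 a ha u hu] at h
    norm_num at h
    exact (smul_eq_zero.mp h.symm).resolve_left (by norm_num)
  have hneg : ∀ n : ℕ, ∀ a ∈ ρ.ann X (-1) ⊓ ρ.ann X (-2), ∀ u ∈ X, ρ.d (-n) a u = 0 := by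
    intro n
    induction n using Nat.strong_induction_on with
    | _ n ih =>
      intro a ha u hu
      rcases Nat.eq_zero_or_pos n with rfl | hn
      · simpa using h0 a ha u hu
      refine hρ.eq_zero_of_singular (ν := ν) ?_ hn (y := ρ.d (-n) a u) ?_ ?_
      · intro hbot
        rw [hbot] at hv
        exact hv0 hv
      · have h := d_mem_wt hu.1 (-n) a
        rwa [show ν + ((-n : ℤ) : ℂ) = ν - n by push_cast; ring] at h
      · intro m hm b
        have hba := (ρ.ann X (-1) ⊓ ρ.ann X (-2)).mul_mem_left b ha
        rw [ρ.comm_d, hu.2 m hm, map_zero, hcen _ hba u hu, smul_zero, add_zero, zero_add]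
        rcases lt_or_ge 0 (m + -n) with h | h
        · rw [hu.2 _ (by omega), smul_zero]
        · have h3 := ih (n - m.toNat) (by omega) _ hba u hu
          rw [show (-((n - m.toNat : ℕ) : ℤ)) = m + -n by omega] at h3
          rw [h3, smul_zero]
  intro a ha j
  rcases lt_or_ge 0 j with h | h
  · exact hsing j (by omega) a
  · have h3 := hneg j.natAbs a ha v ⟨hv, hsing⟩
    rwa [show -(j.natAbs : ℤ) = j by omega] at h3

/-- If `w` of weight `μ + k` with `k` large is killed by `dₘ ⊗ a` for all `m ≥ N`, and so is
the weight space of weight `μ`, then all `dⱼ ⊗ a` kill `w`. -/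
lemma d_eq_zero_of_large {μ : ℂ} {N : ℤ} (hN : ρ.wt μ ≤ ρ.killed N) {k : ℤ} (hk : N + 2 ≤ k)
    (hk0 : 3 ≤ k) {w : V} (hw : w ∈ ρ.wt (μ + k)) (hwN : w ∈ ρ.killed N) (j : ℤ) (a : A) :
    ρ.d j a w = 0 := by
  have h1 : ∀ i ≥ -2, i ≠ 0 → ∀ a, ρ.d i a w = 0 := by
    intro i hi hi0 a
    have hw' : ρ.d (-k) 1 w ∈ ρ.wt μ := by
      simpa using d_mem_wt hw (-k) 1
    have h := ρ.d_add_eq_zero (n := i + k) (m := -k) (a := a) (b := 1) (v := w) (by omega)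
      (Or.inl (by omega)) (hN hw' _ (by omega) a) (by rw [hwN _ (by omega), map_zero])
    rwa [add_neg_cancel_right, mul_one] at h
  have h0 : ∀ a, ρ.d 0 a w = 0 := by
    intro a
    have h := ρ.d_add_eq_zero (n := 1) (m := -1) (a := 1) (b := a) (v := w) (by norm_num)
      (Or.inr (Or.inl rfl)) (by rw [h1 _ (by norm_num) (by norm_num), map_zero])
      (by rw [h1 _ (by norm_num) (by norm_num), map_zero])
    rwa [one_mul] at h
  have hneg : ∀ (n : ℕ) (a), ρ.d (-2 - n) a w = 0 := by
    intro n
    induction n with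
    | zero => intro a; simpa using h1 (-2) le_rfl (by norm_num) a
    | succ n ih =>
      intro a
      have h := ρ.d_add_eq_zero (n := -1) (m := -2 - n) (a := 1) (b := a) (v := w) (by omega)
        (Or.inr (Or.inr rfl)) (by rw [ih, map_zero])
        (by rw [h1 _ (by norm_num) (by norm_num), map_zero])
      rwa [one_mul, show -1 + (-2 - (n : ℤ)) = -2 - (n + 1 : ℕ) by push_cast; ring] at h
  rcases lt_or_ge j (-2) with h | h
  · have h3 := hneg (-2 - j).toNat a
    rwa [show -2 - ((-2 - j).toNat : ℤ) = j by omega] at h3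
  · by_cases hj : j = 0
    · rw [hj]; exact h0 a
    · exact h1 j h hj a

theorem Irreducible.exists_ideal_of_unbounded [IsNoetherianRing A] (hρ : ρ.Irreducible) {μ : ℂ}
    (hfd : ∀ j : ℤ, FiniteDimensional ℂ (ρ.wt (μ + j)))
    (hunb : ∀ B : ℕ, ∃ n : ℕ, 1 ≤ n ∧ B < Module.finrank ℂ (ρ.wt (μ - n))) :
    ∃ v : V, v ≠ 0 ∧ ∃ I : Ideal A, (I.restrictScalars ℂ).CoFG ∧
      ∀ a ∈ I, ∀ j, ρ.d j a v = 0 := by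
  obtain ⟨j, v, hv, hv0, N', hvN'⟩ := hρ.exists_killed_of_unbounded hfd hunb
  have hfd0 : FiniteDimensional ℂ (ρ.wt μ) := by
    have h := hfd 0
    rwa [Int.cast_zero, add_zero] at h
  obtain ⟨M, hM⟩ := exists_le_killed (hρ.exists_mem_killed hv0 hvN') (ρ.wt μ)
  set N := max (max N' M) 1 with hN
  have hvN : v ∈ ρ.killed N := killed_mono (by omega) hvN'
  have hMN : ρ.wt μ ≤ ρ.killed N := hM.trans (killed_mono (by omega))
  let P : ℤ → Prop := fun k => ∃ w ∈ ρ.wt (μ + k), w ≠ 0 ∧ w ∈ ρ.killed N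
  by_cases hbdd : ∃ b : ℤ, ∀ k, P k → k ≤ b
  · obtain ⟨k, ⟨w, hw, hw0, hwN⟩, hmax⟩ := Int.exists_greatest_of_bdd hbdd ⟨j, v, hv, hv0, hvN⟩
    refine ⟨w, hw0, hρ.exists_ideal_of_singular (ν := μ + k) (fun n => ?_) hw hw0 ?_⟩
    · have h := hfd (k - n)
      rwa [show μ + ((k - n : ℤ) : ℂ) = μ + k - n by push_cast; ring] at h
    · intro i hi a
      by_contra hne
      have h := hmax (k + i) ⟨ρ.d i a w, ?_, hne, d_mem_killed hwN a le_rfl (by omega) (by omega)⟩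
      · omega
      · have h := d_mem_wt hw i a
        rwa [show μ + k + i = μ + ((k + i : ℤ) : ℂ) by push_cast; ring] at h
  · push Not at hbdd
    obtain ⟨k, ⟨w, hw, hw0, hwN⟩, hk⟩ := hbdd (N + 2)
    exact ⟨w, hw0, ⊤, by rw [Submodule.restrictScalars_top]; exact Submodule.CoFG.top,
      fun a _ j => d_eq_zero_of_large hMN hk.le (by omega) hw hwN j a⟩

variable (ρ) in
/-- The representation twisted by `dₙ ↦ -d₋ₙ`, `C ↦ -C`. -/
def op : VirRep A V where
  d n := -ρ.d (-n)
  c := -ρ.c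
  comm_d := by
    intro n m a b v
    have h := ρ.comm_d (-n) (-m) a b v
    have hc : (if -m = - -n then (((-n : ℤ) : ℂ) ^ 3 - (-n : ℤ)) / 12 else 0) =
        -(if m = -n then ((n : ℂ) ^ 3 - n) / 12 else 0) := by
      by_cases hm : m = -n
      · rw [if_pos hm, if_pos (by omega)]; push_cast; ring
      · rw [if_neg hm, if_neg (by omega), neg_zero]
    rw [hc] at h
    simp only [LinearMap.neg_apply, map_neg, neg_neg, smul_neg]
    rw [h, neg_add]
    push_cast
    module
  comm_c := by
    intro a n b v
    simp [ρ.comm_c]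

lemma wt_op (μ : ℂ) : ρ.op.wt μ = ρ.wt (-μ) := by
  ext v
  simp [mem_wt, op, neg_eq_iff_eq_neg]

lemma Irreducible.op (hρ : ρ.Irreducible) : ρ.op.Irreducible := by
  intro W hW
  refine hρ W fun n a w hw => ?_
  simpa [VirRep.op] using hW (-n) a w hw

theorem Irreducible.exists_ideal [IsNoetherianRing A] (hρ : ρ.Irreducible) {μ : ℂ}
    (hμ : ρ.wt μ ≠ ⊥) (hfd : ∀ j : ℤ, FiniteDimensional ℂ (ρ.wt (μ + j))) :
    ∃ v : V, v ≠ 0 ∧ ∃ I : Ideal A, (I.restrictScalars ℂ).CoFG ∧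
      ∀ a ∈ I, ∀ j, ρ.d j a v = 0 := by
  by_cases h1 : ∀ B : ℕ, ∃ n : ℕ, 1 ≤ n ∧ B < Module.finrank ℂ (ρ.wt (μ - n))
  · exact hρ.exists_ideal_of_unbounded hfd h1
  by_cases h2 : ∀ B : ℕ, ∃ n : ℕ, 1 ≤ n ∧ B < Module.finrank ℂ (ρ.wt (μ + n))
  · obtain ⟨v, hv0, I, hI, hIv⟩ := hρ.op.exists_ideal_of_unbounded (μ := -μ)
      (fun j => by
        rw [wt_op, show -(-μ + (j : ℂ)) = μ + ((-j : ℤ) : ℂ) by push_cast; ring]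
        exact hfd _)
      (fun B => by
        obtain ⟨n, hn, hB⟩ := h2 B
        refine ⟨n, hn, ?_⟩
        rwa [wt_op, show -(-μ - (n : ℂ)) = μ + n by ring])
    exact ⟨v, hv0, I, hI, fun a ha j => by simpa [VirRep.op] using hIv a ha (-j)⟩
  push Not at h1 h2
  obtain ⟨B, hB⟩ := h1
  obtain ⟨B', hB'⟩ := h2
  have hfd0 : FiniteDimensional ℂ (ρ.wt μ) := by
    have h := hfd 0
    rwa [Int.cast_zero, add_zero] at h
  have hbdd : ∀ j : ℤ, Module.finrank ℂ (ρ.wt (μ + j)) ≤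
      max (max B B') (Module.finrank ℂ (ρ.wt μ)) := by
    intro j
    rcases lt_trichotomy j 0 with h | rfl | h
    · obtain ⟨n, rfl⟩ : ∃ n : ℕ, j = -n := ⟨j.natAbs, by omega⟩
      have h3 := hB n (by omega)
      rw [show μ + ((-n : ℤ) : ℂ) = μ - n by push_cast; ring]
      omega
    · rw [Int.cast_zero, add_zero]; omega
    · obtain ⟨n, rfl⟩ : ∃ n : ℕ, j = n := ⟨j.natAbs, by omega⟩
      have h3 := hB' n (by omega)
      rw [Int.cast_natCast]
      omega
  obtain ⟨I, hI, hIv⟩ := ρ.exists_ideal_of_bounded (ρ.wt μ)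
    (fun a u hu => by simpa using d_mem_wt hu 0 a) (fun j => ρ.wt (μ + j))
    hbdd (fun j a u hu => d_mem_wt hu j a)
  obtain ⟨v, hv, hv0⟩ := (Submodule.ne_bot_iff _).mp hμ
  exact ⟨v, hv0, I, hI, fun a ha j => hIv a ha j v hv⟩

end VirRep

/-- The commutation relations of `sl₂` for linear operators `e`, `f`, `h`. -/
structure Sl2Rel {V : Type*} [AddCommGroup V] [Module ℂ V] (e f h : Module.End ℂ V) : Prop where
  ef : ∀ v, e (f v) = f (e v) + h v
  he : ∀ v, h (e v) = e (h v) + (2 : ℂ) • e v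
  hf : ∀ v, h (f v) = f (h v) - (2 : ℂ) • f v

namespace Sl2Rel

variable {V : Type*} [AddCommGroup V] [Module ℂ V] {e f h : Module.End ℂ V}

lemma symm (H : Sl2Rel e f h) : Sl2Rel f e (-h) where
  ef v := by simp [H.ef v]
  he v := by simp [H.hf v]; abel
  hf v := by simp [H.he v]; abel

lemma h_e_pow (H : Sl2Rel e f h) {c : ℂ} {v : V} (hv : h v = c • v) (k : ℕ) :
    h ((e ^ k) v) = (c + 2 * k) • (e ^ k) v := by
  induction k with
  | zero => simp [hv]
  | succ k ih =>
    rw [pow_succ', Module.End.mul_apply, H.he, ih, map_smul]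
    push_cast
    module

lemma h_f_pow (H : Sl2Rel e f h) {c : ℂ} {v : V} (hv : h v = c • v) (k : ℕ) :
    h ((f ^ k) v) = (c - 2 * k) • (f ^ k) v := by
  induction k with
  | zero => simp [hv]
  | succ k ih =>
    rw [pow_succ', Module.End.mul_apply, H.hf, ih, map_smul]
    push_cast
    module

lemma e_f_pow (H : Sl2Rel e f h) {c : ℂ} {v : V} (hv : h v = c • v) (k : ℕ) :
    e ((f ^ (k + 1)) v) = (f ^ (k + 1)) (e v) + ((k + 1 : ℂ) * (c - k)) • (f ^ k) v := by
  induction k with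
  | zero => simp [H.ef, hv]
  | succ k ih =>
    have hk (w : V) (j : ℕ) : (f ^ (j + 1)) w = f ((f ^ j) w) := by
      rw [pow_succ', Module.End.mul_apply]
    rw [hk _ (k + 1), H.ef, ih, H.h_f_pow hv, map_add, map_smul, ← hk, ← hk v k]
    push_cast
    module

lemma exists_pow_ne_zero {T : Module.End ℂ V} {v : V} (hv : v ≠ 0) (hT : ∃ N : ℕ, (T ^ N) v = 0) :
    ∃ r : ℕ, (T ^ r) v ≠ 0 ∧ (T ^ (r + 1)) v = 0 := by
  classical
  have h1 := Nat.find_spec hT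
  have h2 := fun m => Nat.find_min hT (m := m)
  rcases hN : Nat.find hT with _ | r
  · rw [hN] at h1
    exact absurd h1 hv
  · exact ⟨r, h2 r (by omega), by rw [hN] at h1; exact h1⟩

lemma eq_intCast (H : Sl2Rel e f h) (he : ∀ v, ∃ N : ℕ, (e ^ N) v = 0)
    (hf : ∀ v, ∃ N : ℕ, (f ^ N) v = 0) {c : ℂ} {v : V} (hv0 : v ≠ 0) (hv : h v = c • v) :
    ∃ z : ℤ, c = z := by
  obtain ⟨r, hr, hr'⟩ := exists_pow_ne_zero hv0 (he v)
  obtain ⟨k, hk, hk'⟩ := exists_pow_ne_zero hr (hf ((e ^ r) v))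
  rw [pow_succ', Module.End.mul_apply] at hr'
  have h1 := H.e_f_pow (H.h_e_pow hv r) k
  rw [hk', hr', map_zero, map_zero, zero_add, eq_comm, smul_eq_zero, or_iff_left hk,
    mul_eq_zero, or_iff_right (by exact_mod_cast k.succ_ne_zero)] at h1
  exact ⟨k - 2 * r, by push_cast; linear_combination h1⟩

lemma eq_zero_of_f_pow (H : Sl2Rel e f h) (r : ℕ) : ∀ (p : ℕ) (v : V), h v = (p : ℂ) • v →
    (e ^ r) v = 0 → (f ^ p) v = 0 → v = 0 := by
  induction r with
  | zero => intro p v _ h1 _; simpa using h1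
  | succ r ih =>
    intro p v hv he hf
    have hev : e v = 0 := by
      refine ih (p + 2) (e v) ?_ ?_ ?_
      · rw [H.he, hv, map_smul]; push_cast; module
      · rw [← Module.End.mul_apply, ← pow_succ]; exact he
      · have h1 := H.e_f_pow hv (p + 1)
        have h2 : (f ^ (p + 1)) v = 0 := by rw [pow_succ', Module.End.mul_apply, hf, map_zero]
        have h3 : (f ^ (p + 1 + 1)) v = 0 := by rw [pow_succ', Module.End.mul_apply, h2, map_zero]
        rw [h3, h2, map_zero, smul_zero, add_zero] at h1
        exact h1.symm
    have key : ∀ k ≤ p, (f ^ k) v = 0 → v = 0 := by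
      intro k
      induction k with
      | zero => intro _ h1; simpa using h1
      | succ k ihk =>
        intro hk h1
        have h2 := H.e_f_pow hv k
        rw [h1, hev, map_zero, map_zero, zero_add, eq_comm, smul_eq_zero] at h2
        refine ihk (by omega) (h2.resolve_left (mul_ne_zero ?_ ?_))
        · exact_mod_cast k.succ_ne_zero
        · rw [sub_ne_zero]; exact_mod_cast (by omega : p ≠ k)
    exact key p le_rfl hf

end Sl2Rel

namespace LieAlgebra.IsKilling

variable {g : Type*} [LieRing g] [LieAlgebra ℂ g] [FiniteDimensional ℂ g]
  [LieAlgebra.IsKilling ℂ g] (H : LieSubalgebra ℂ g) [H.IsCartanSubalgebra]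

lemma exists_root_apply_coroot_ne_zero {φ : Module.Dual ℂ H} (hφ : φ ≠ 0) :
    ∃ α : LieModule.Weight ℂ H g, α.IsNonZero ∧ φ (coroot α) ≠ 0 := by
  by_contra! hc
  apply hφ
  rw [← LinearMap.ker_eq_top, eq_top_iff, ← RootPairing.IsRootSystem.span_coroot_eq_top (P := rootSystem H),
    Submodule.span_le]
  rintro _ ⟨α, rfl⟩
  exact hc α (Finset.mem_filter.mp α.2).2

lemma iSup_eigen_eq_top : ⨆ α : Module.Dual ℂ H, (⨅ h : H,
    Module.End.eigenspace (LieAlgebra.ad ℂ g (h : g)) (α h)) = ⊤ := by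
  have h1 := congrArg LieSubmodule.toSubmodule (LieModule.iSup_genWeightSpace_eq_top' ℂ H g)
  rw [LieSubmodule.iSup_toSubmodule, LieSubmodule.top_toSubmodule] at h1
  rw [eq_top_iff, ← h1]
  refine iSup_le fun α => le_iSup_of_le α.toLinear fun x hx => ?_
  rw [Submodule.mem_iInf]
  intro h
  rw [Module.End.mem_eigenspace_iff]
  exact lie_eq_smul_of_mem_rootSpace hx h

end LieAlgebra.IsKilling

namespace LoopAffVir

open CofiniteIdeal

variable {g A L : Type*} [LieRing g] [LieAlgebra ℂ g] [CommRing A] [Algebra ℂ A]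
  [LieRing L] [LieAlgebra ℂ L] (S : LoopAffVir g A L)
  {V : Type*} [AddCommGroup V] [Module ℂ V] [LieRingModule L V] [LieModule ℂ L V]

lemma lie_mem_of_generators {W : Submodule ℂ V} {v : V}
    (hE : ∀ n x a, ⁅S.E n x a, v⁆ ∈ W) (hD : ∀ n a, ⁅S.D n a, v⁆ ∈ W)
    (hK : ∀ a, ⁅S.K a, v⁆ ∈ W) (hC : ∀ a, ⁅S.C a, v⁆ ∈ W) (z : L) : ⁅z, v⁆ ∈ W := by
  have hz : z ∈ (⊤ : Submodule ℂ L) := trivial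
  rw [← S.span_top] at hz
  induction hz using Submodule.span_induction with
  | mem z hz =>
    rcases hz with ((⟨n, x, a, rfl⟩ | ⟨n, a, rfl⟩) | ⟨a, rfl⟩) | ⟨a, rfl⟩
    exacts [hE n x a, hD n a, hK a, hC a]
  | zero => rw [zero_lie]; exact W.zero_mem
  | add x y _ _ hx hy => rw [add_lie]; exact W.add_mem hx hy
  | smul c x _ hx => rw [smul_lie]; exact W.smul_mem c hx

lemma eq_top_of_generators (hIrr : IsSimpleOrder (LieSubmodule ℂ L V)) {W : Submodule ℂ V} {v : V}
    (hv : v ∈ W) (hv0 : v ≠ 0) (hE : ∀ n x a, ∀ w ∈ W, ⁅S.E n x a, w⁆ ∈ W)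
    (hD : ∀ n a, ∀ w ∈ W, ⁅S.D n a, w⁆ ∈ W) (hK : ∀ a, ∀ w ∈ W, ⁅S.K a, w⁆ ∈ W)
    (hC : ∀ a, ∀ w ∈ W, ⁅S.C a, w⁆ ∈ W) : W = ⊤ := by
  let W' : LieSubmodule ℂ L V :=
    { W with
      lie_mem := fun {z w} hw => S.lie_mem_of_generators (fun n x a => hE n x a w hw)
        (fun n a => hD n a w hw) (fun a => hK a w hw) (fun a => hC a w hw) z }
  have h : W' ≠ ⊥ := fun h => hv0 ((LieSubmodule.eq_bot_iff W').mp h v hv)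
  have h2 := congrArg LieSubmodule.toSubmodule (hIrr.eq_bot_or_eq_top W' |>.resolve_left h)
  exact h2

lemma lie_E_E (n m : ℤ) (x y : g) (a b : A) (v : V) :
    ⁅S.E n x a, ⁅S.E m y b, v⁆⁆ = ⁅S.E m y b, ⁅S.E n x a, v⁆⁆ + ⁅S.E (n + m) ⁅x, y⁆ (a * b), v⁆
      + (if m = -n then (n : ℂ) * S.form x y else 0) • ⁅S.K (a * b), v⁆ := by
  rw [leibniz_lie, S.lie_EE, add_lie, smul_lie]
  abel

lemma lie_D_E (n m : ℤ) (x : g) (a b : A) (v : V) :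
    ⁅S.D n a, ⁅S.E m x b, v⁆⁆ = ⁅S.E m x b, ⁅S.D n a, v⁆⁆
      + (m : ℂ) • ⁅S.E (m + n) x (a * b), v⁆ := by
  rw [leibniz_lie, S.lie_DE, smul_lie]
  abel

lemma lie_D_D (n m : ℤ) (a b : A) (v : V) :
    ⁅S.D n a, ⁅S.D m b, v⁆⁆ = ⁅S.D m b, ⁅S.D n a, v⁆⁆
      + ((m : ℂ) - n) • ⁅S.D (n + m) (a * b), v⁆
      + (if m = -n then ((n : ℂ) ^ 3 - n) / 12 else 0) • ⁅S.C (a * b), v⁆ := by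
  rw [leibniz_lie, S.lie_DD, add_lie, smul_lie, smul_lie]
  abel

lemma lie_K_comm (a : A) (z : L) (v : V) : ⁅z, ⁅S.K a, v⁆⁆ = ⁅S.K a, ⁅z, v⁆⁆ := by
  rw [leibniz_lie (S.K a), S.K_central, zero_lie, zero_add]

lemma lie_C_comm (a : A) (z : L) (v : V) : ⁅z, ⁅S.C a, v⁆⁆ = ⁅S.C a, ⁅z, v⁆⁆ := by
  rw [leibniz_lie (S.C a), S.C_central, zero_lie, zero_add]

variable (V) in
/-- The joint eigenspaces of `h̊ ⊕ ℂd₀`. -/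
def jw (l : Module.Dual ℂ S.H) (μ : ℂ) : Submodule ℂ V where
  carrier := {v | (∀ h : S.H, ⁅S.E 0 (h : g) 1, v⁆ = l h • v) ∧ ⁅S.D 0 1, v⁆ = μ • v}
  add_mem' ha hb := ⟨fun h => by rw [lie_add, ha.1, hb.1, smul_add],
    by rw [lie_add, ha.2, hb.2, smul_add]⟩
  zero_mem' := ⟨fun h => by rw [lie_zero, smul_zero], by rw [lie_zero, smul_zero]⟩
  smul_mem' c v hv := ⟨fun h => by rw [lie_smul, hv.1, smul_comm],
    by rw [lie_smul, hv.2, smul_comm]⟩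

variable {S}

lemma D_mem_jw {l : Module.Dual ℂ S.H} {μ : ℂ} {v : V} (hv : v ∈ S.jw V l μ) (n : ℤ) (a : A) :
    ⁅S.D n a, v⁆ ∈ S.jw V l (μ + n) := by
  refine ⟨fun h => ?_, ?_⟩
  · have h1 := S.lie_D_E n 0 (h : g) a 1 v
    rw [Int.cast_zero, zero_smul, add_zero, hv.1, lie_smul] at h1
    exact h1.symm
  · rw [S.lie_D_D, hv.2, lie_smul, zero_add, one_mul]
    simp [add_smul]

lemma E_mem_jw {l α : Module.Dual ℂ S.H} {μ : ℂ} {v : V} (hv : v ∈ S.jw V l μ) (n : ℤ) {x : g}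
    (hx : x ∈ S.rootSp α) (a : A) : ⁅S.E n x a, v⁆ ∈ S.jw V (l + α) (μ + n) := by
  refine ⟨fun h => ?_, ?_⟩
  · rw [S.lie_E_E, hv.1, lie_smul, (S.rootSp_def α x).mp hx h, zero_add, one_mul]
    simp [add_smul]
  · rw [S.lie_D_E, hv.2, lie_smul, add_zero, one_mul]
    simp [add_smul]

lemma wtSpace_le_jw (χ : Module.Dual ℂ S.cartan) : ∃ l : Module.Dual ℂ S.H,
    S.wtSpace V χ ≤ S.jw V l (χ S.d0) := by
  refine ⟨{ toFun := fun h => χ (S.eH h), map_add' := ?_, map_smul' := ?_ }, ?_⟩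
  · intro h k
    rw [← map_add]
    congr 1
    ext
    simp [eH]
  · intro c h
    rw [RingHom.id_apply, ← map_smul]
    congr 1
    ext
    simp [eH]
  · intro v hv
    exact ⟨fun h => hv (S.eH h), hv S.d0⟩

lemma finiteDimensional_jw (hfd : S.HasFinDimWeightSpaces V) (hK : ∀ v : V, ⁅S.K 1, v⁆ = 0)
    {c : ℂ} (hC : ∀ v : V, ⁅S.C 1, v⁆ = c • v) (l : Module.Dual ℂ S.H) (μ : ℂ) :
    FiniteDimensional ℂ (S.jw V l μ) := by
  by_cases h0 : S.jw V l μ = ⊥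
  · rw [h0]
    infer_instance
  obtain ⟨v, hv, hv0⟩ := Submodule.exists_mem_ne_zero_of_ne_bot h0
  have h1 : ∀ z : S.cartan, ∃ s : ℂ, ∀ w ∈ S.jw V l μ, ⁅(z : L), w⁆ = s • w := by
    rintro ⟨z, hz⟩
    change ∃ s : ℂ, ∀ w ∈ S.jw V l μ, ⁅z, w⁆ = s • w
    rw [cartan] at hz
    induction hz using Submodule.span_induction with
    | mem z hz =>
      rcases hz with ⟨h, hh, rfl⟩ | rfl | rfl | rfl
      · exact ⟨l ⟨h, hh⟩, fun w hw => hw.1 ⟨h, hh⟩⟩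
      · exact ⟨0, fun w _ => by rw [hK, zero_smul]⟩
      · exact ⟨μ, fun w hw => hw.2⟩
      · exact ⟨c, fun w _ => hC w⟩
    | zero => exact ⟨0, fun w _ => by rw [zero_lie, zero_smul]⟩
    | add x y _ _ hx hy =>
      obtain ⟨s, hs⟩ := hx
      obtain ⟨t, ht⟩ := hy
      exact ⟨s + t, fun w hw => by rw [add_lie, hs w hw, ht w hw, add_smul]⟩
    | smul r x _ hx =>
      obtain ⟨s, hs⟩ := hx
      exact ⟨r * s, fun w hw => by rw [smul_lie, hs w hw, mul_smul]⟩
  choose s hs using h1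
  let χ : Module.Dual ℂ S.cartan :=
    { toFun := s
      map_add' := fun x y => by
        apply smul_left_injective ℂ hv0
        simp only
        rw [← hs _ v hv, add_smul, ← hs _ v hv, ← hs _ v hv, ← add_lie]
        rfl
      map_smul' := fun r x => by
        apply smul_left_injective ℂ hv0
        simp only [RingHom.id_apply, smul_eq_mul]
        rw [← hs _ v hv, mul_smul, ← hs _ v hv, ← smul_lie]
        rfl }
  have := hfd χ
  exact Submodule.finiteDimensional_of_le (S₂ := S.wtSpace V χ) fun w hw z => hs z w hw

lemma exists_wtSpace_ne_bot [Nontrivial V] (hw : S.IsWeightModule V) :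
    ∃ χ : Module.Dual ℂ S.cartan, S.wtSpace V χ ≠ ⊥ := by
  by_contra! h
  rw [IsWeightModule, iSup_congr h, iSup_bot] at hw
  exact bot_ne_top hw

lemma exists_C_eq_smul (hIrr : IsSimpleOrder (LieSubmodule ℂ L V))
    {χ : Module.Dual ℂ S.cartan} (hχ : S.wtSpace V χ ≠ ⊥) :
    ∃ c : ℂ, ∀ v : V, ⁅S.C 1, v⁆ = c • v := by
  obtain ⟨v, hv, hv0⟩ := Submodule.exists_mem_ne_zero_of_ne_bot hχ
  refine ⟨χ S.C1, fun w => ?_⟩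
  have hz : ∀ (z : L), ∀ w ∈ Module.End.eigenspace (LieModule.toEnd ℂ L V (S.C 1)) (χ S.C1),
      ⁅z, w⁆ ∈ Module.End.eigenspace (LieModule.toEnd ℂ L V (S.C 1)) (χ S.C1) := by
    intro z w hw
    rw [Module.End.mem_eigenspace_iff, LieModule.toEnd_apply_apply] at hw ⊢
    rw [← S.lie_C_comm, hw, lie_smul]
  have h := S.eq_top_of_generators hIrr (Module.End.mem_eigenspace_iff.mpr (hv S.C1)) hv0
    (fun n x a => hz _) (fun n a => hz _) (fun a => hz _) (fun a => hz _)
  have hw : w ∈ (⊤ : Submodule ℂ V) := trivial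
  rw [← h, Module.End.mem_eigenspace_iff] at hw
  exact hw

/-- An ideal killing one nonzero vector has a square killing the whole module. -/
lemma annihilates_mul (hIrr : IsSimpleOrder (LieSubmodule ℂ L V)) [Nontrivial g] {I : Ideal A}
    {v : V} (hv0 : v ≠ 0) (hE : ∀ n x, ∀ a ∈ I, ⁅S.E n x a, v⁆ = 0)
    (hD : ∀ n, ∀ a ∈ I, ⁅S.D n a, v⁆ = 0) : S.Annihilates V (I * I) := by
  have hKv : ∀ a ∈ I * I, ⁅S.K a, v⁆ = 0 := by
    obtain ⟨x, hx⟩ := exists_ne (0 : g)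
    have hxy : ∃ y, S.form x y ≠ 0 := by
      by_contra! h
      exact hx (S.form_nondeg x h)
    obtain ⟨y, hy⟩ := hxy
    intro a ha
    induction ha using Submodule.mul_induction_on' with
    | mem_mul_mem a ha b hb =>
      have h1 := S.lie_E_E 1 (-1) x y a b v
      rw [hE _ _ b hb, hE _ _ a ha, lie_zero, lie_zero, hE _ _ _ (I.mul_mem_left a hb), if_pos rfl,
        zero_add, zero_add, eq_comm, smul_eq_zero] at h1
      simpa [hy] using h1
    | add a _ b _ ha hb => rw [map_add, add_lie, ha, hb, add_zero]
  have hCv : ∀ a ∈ I * I, ⁅S.C a, v⁆ = 0 := by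
    intro a ha
    induction ha using Submodule.mul_induction_on' with
    | mem_mul_mem a ha b hb =>
      have h1 := S.lie_D_D 2 (-2) a b v
      rw [hD _ b hb, hD _ a ha, lie_zero, lie_zero, hD _ _ (I.mul_mem_left a hb), if_pos rfl,
        smul_zero, zero_add, zero_add, eq_comm, smul_eq_zero] at h1
      refine h1.resolve_left ?_
      norm_num
    | add a _ b _ ha hb => rw [map_add, add_lie, ha, hb, add_zero]
  let W : Submodule ℂ V :=
    { carrier := {w | ∀ a ∈ I * I, (∀ n x, ⁅S.E n x a, w⁆ = 0) ∧ (∀ n, ⁅S.D n a, w⁆ = 0) ∧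
        ⁅S.K a, w⁆ = 0 ∧ ⁅S.C a, w⁆ = 0}
      add_mem' := fun {u w} hu hw a ha => by
        obtain ⟨h1, h2, h3, h4⟩ := hu a ha
        obtain ⟨k1, k2, k3, k4⟩ := hw a ha
        simp [h1, h2, h3, h4, k1, k2, k3, k4]
      zero_mem' := fun a ha => by simp
      smul_mem' := fun c w hw a ha => by
        obtain ⟨h1, h2, h3, h4⟩ := hw a ha
        simp [h1, h2, h3, h4] }
  have hvW : v ∈ W := fun a ha => ⟨fun n x => hE n x a (Ideal.mul_le_left ha),
    fun n => hD n a (Ideal.mul_le_left ha), hKv a ha, hCv a ha⟩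
  have hW : W = ⊤ := by
    refine S.eq_top_of_generators hIrr hvW hv0 ?_ ?_ ?_ ?_
    · intro m y b w hw a ha
      obtain ⟨h1, h2, h3, h4⟩ := hw a ha
      obtain ⟨k1, -, k3, -⟩ := hw (a * b) (Ideal.mul_mem_right b _ ha)
      refine ⟨fun n x => ?_, fun n => ?_, ?_, ?_⟩
      · rw [S.lie_E_E, h1, k1, k3, lie_zero]
        simp
      · rw [S.lie_D_E, h2, k1, lie_zero]
        simp
      · rw [← S.lie_K_comm, h3, lie_zero]
      · rw [← S.lie_C_comm, h4, lie_zero]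
    · intro m b w hw a ha
      obtain ⟨h1, h2, h3, h4⟩ := hw a ha
      obtain ⟨k1, k2, -, k4⟩ := hw (a * b) (Ideal.mul_mem_right b _ ha)
      refine ⟨fun n x => ?_, fun n => ?_, ?_, ?_⟩
      · have h5 := S.lie_D_E m n x b a w
        rw [mul_comm b a, k1, h1, lie_zero, smul_zero, add_zero] at h5
        exact h5.symm
      · rw [S.lie_D_D, h2, k2, k4, lie_zero]
        simp
      · rw [← S.lie_K_comm, h3, lie_zero]
      · rw [← S.lie_C_comm, h4, lie_zero]
    · intro b w hw a ha
      obtain ⟨h1, h2, h3, h4⟩ := hw a ha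
      refine ⟨fun n x => ?_, fun n => ?_, ?_, ?_⟩
      · rw [S.lie_K_comm, h1, lie_zero]
      · rw [S.lie_K_comm, h2, lie_zero]
      · rw [S.lie_K_comm, h3, lie_zero]
      · rw [S.lie_K_comm, h4, lie_zero]
    · intro b w hw a ha
      obtain ⟨h1, h2, h3, h4⟩ := hw a ha
      refine ⟨fun n x => ?_, fun n => ?_, ?_, ?_⟩
      · rw [S.lie_C_comm, h1, lie_zero]
      · rw [S.lie_C_comm, h2, lie_zero]
      · rw [S.lie_C_comm, h3, lie_zero]
      · rw [S.lie_C_comm, h4, lie_zero]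
  have hall : ∀ w : V, w ∈ W := fun w => hW ▸ (trivial : w ∈ (⊤ : Submodule ℂ V))
  exact fun a ha => ⟨fun n x w => (hall w a ha).1 n x, fun n w => (hall w a ha).2.1 n,
    fun w => (hall w a ha).2.2.1, fun w => (hall w a ha).2.2.2⟩

end LoopAffVir

namespace LoopAffVir

open CofiniteIdeal

variable {g A L : Type*} [LieRing g] [LieAlgebra ℂ g] [CommRing A] [Algebra ℂ A]
  [LieRing L] [LieAlgebra ℂ L] {S : LoopAffVir g A L}
  {V : Type*} [AddCommGroup V] [Module ℂ V] [LieRingModule L V] [LieModule ℂ L V]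

variable (S V) in
/-- The restriction of an `𝔏(A)`-module to `Vir ⊗ A`. -/
def virRep : VirRep A V where
  d n := (LieModule.toEnd ℂ L V : L →ₗ[ℂ] Module.End ℂ V) ∘ₗ S.D n
  c := (LieModule.toEnd ℂ L V : L →ₗ[ℂ] Module.End ℂ V) ∘ₗ S.C
  comm_d n m a b v := S.lie_D_D n m a b v
  comm_c a n b v := (S.lie_C_comm a (S.D n b) v).symm

lemma virRep_d (n : ℤ) (a : A) (v : V) : (S.virRep V).d n a v = ⁅S.D n a, v⁆ := rfl

/-- The ideal of those `b` for which `x ⊗ t ⊗ b` kills `U`. -/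
def annE (U : Submodule ℂ V) (hU : ∀ a, ∀ u ∈ U, ⁅S.D 0 a, u⁆ ∈ U) (x : g) : Ideal A where
  carrier := {b | ∀ u ∈ U, ⁅S.E 1 x b, u⁆ = 0}
  add_mem' hb hc u hu := by rw [map_add, add_lie, hb u hu, hc u hu, add_zero]
  zero_mem' u hu := by rw [map_zero, zero_lie]
  smul_mem' c b hb u hu := by
    have h1 := S.lie_D_E 0 1 x c b u
    rw [hb u hu, hb _ (hU c u hu), lie_zero, zero_add, Int.cast_one, one_smul, add_zero] at h1
    exact h1.symm

lemma annE_cofg_of_mem_rootSp (hfd : ∀ l μ, FiniteDimensional ℂ (S.jw V l μ))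
    {l α : Module.Dual ℂ S.H} {μ : ℂ} (hU : ∀ a, ∀ u ∈ S.jw V l μ, ⁅S.D 0 a, u⁆ ∈ S.jw V l μ)
    {x : g} (hx : x ∈ S.rootSp α) : ((annE (S.jw V l μ) hU x).restrictScalars ℂ).CoFG := by
  have := hfd l μ
  have := hfd (l + α) (μ + (1 : ℤ))
  let T : A →ₗ[ℂ] S.jw V l μ →ₗ[ℂ] V :=
    LinearMap.domRestrict₁₂ ((LieModule.toEnd ℂ L V : L →ₗ[ℂ] Module.End ℂ V) ∘ₗ S.E 1 x) ⊤
      (S.jw V l μ) ∘ₗ LinearMap.codRestrict ⊤ LinearMap.id fun _ => trivial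
  refine Submodule.CoFG.of_le ?_
    (ker_cofg T (S.jw V (l + α) (μ + (1 : ℤ))) fun a u => E_mem_jw u.2 1 hx a).1
  intro b hb u hu
  exact LinearMap.congr_fun (LinearMap.mem_ker.mp hb) ⟨u, hu⟩

lemma annE_cofg [FiniteDimensional ℂ g] [LieAlgebra.IsKilling ℂ g]
    (hfd : ∀ l μ, FiniteDimensional ℂ (S.jw V l μ)) {l : Module.Dual ℂ S.H} {μ : ℂ}
    (hU : ∀ a, ∀ u ∈ S.jw V l μ, ⁅S.D 0 a, u⁆ ∈ S.jw V l μ) (x : g) :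
    ((annE (S.jw V l μ) hU x).restrictScalars ℂ).CoFG := by
  have := S.isCartan
  let N : Submodule ℂ g :=
    { carrier := {x | ((annE (S.jw V l μ) hU x).restrictScalars ℂ).CoFG}
      add_mem' := fun {x y} hx hy => Submodule.CoFG.of_le
        (fun b hb u hu => by
          rw [map_add, LinearMap.add_apply, add_lie, hb.1 u hu, hb.2 u hu, add_zero])
        (inf_cofg hx hy)
      zero_mem' := Submodule.CoFG.of_le (S := ⊤)
        (fun b hb u hu => by rw [map_zero, LinearMap.zero_apply, zero_lie]) Submodule.CoFG.top
      smul_mem' := fun c x hx => Submodule.CoFG.of_le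
        (fun b hb u hu => by
          rw [map_smul, LinearMap.smul_apply, smul_lie, hb u hu, smul_zero]) hx }
  have hN : N = ⊤ := by
    rw [eq_top_iff, ← LieAlgebra.IsKilling.iSup_eigen_eq_top S.H]
    refine iSup_le fun α x hx => annE_cofg_of_mem_rootSp hfd hU (α := α) ?_
    rw [S.rootSp_def]
    intro h
    exact Module.End.mem_eigenspace_iff.mp ((Submodule.mem_iInf _).mp hx h)
  have hx : x ∈ N := hN ▸ (trivial : x ∈ (⊤ : Submodule ℂ g))
  exact hx

lemma exists_ideal_le_annE [FiniteDimensional ℂ g] [LieAlgebra.IsKilling ℂ g]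
    (hfd : ∀ l μ, FiniteDimensional ℂ (S.jw V l μ)) {l : Module.Dual ℂ S.H} {μ : ℂ}
    (hU : ∀ a, ∀ u ∈ S.jw V l μ, ⁅S.D 0 a, u⁆ ∈ S.jw V l μ) :
    ∃ J : Ideal A, (J.restrictScalars ℂ).CoFG ∧ ∀ b ∈ J, ∀ (x : g), ∀ u ∈ S.jw V l μ,
      ⁅S.E 1 x b, u⁆ = 0 := by
  suffices h : ∀ N : Submodule ℂ g, N.FG → ∃ J : Ideal A, (J.restrictScalars ℂ).CoFG ∧
      ∀ b ∈ J, ∀ x ∈ N, ∀ u ∈ S.jw V l μ, ⁅S.E 1 x b, u⁆ = 0 by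
    obtain ⟨J, hJ, h1⟩ := h ⊤ Module.Finite.fg_top
    exact ⟨J, hJ, fun b hb x => h1 b hb x trivial⟩
  intro N hN
  refine Submodule.fg_induction (motive := fun N _ => ∃ J : Ideal A, (J.restrictScalars ℂ).CoFG ∧
      ∀ b ∈ J, ∀ x ∈ N, ∀ u ∈ S.jw V l μ, ⁅S.E 1 x b, u⁆ = 0) ?_ ?_ N hN
  · intro x
    refine ⟨annE (S.jw V l μ) hU x, annE_cofg hfd hU x, fun b hb y hy u hu => ?_⟩
    obtain ⟨c, rfl⟩ := Submodule.mem_span_singleton.mp hy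
    rw [map_smul, LinearMap.smul_apply, smul_lie, hb u hu, smul_zero]
  · rintro N₁ N₂ - - ⟨J₁, h1, h1'⟩ ⟨J₂, h2, h2'⟩
    refine ⟨J₁ ⊓ J₂, inf_cofg h1 h2, fun b hb x hx u hu => ?_⟩
    obtain ⟨y, hy, z, hz, rfl⟩ := Submodule.mem_sup.mp hx
    rw [map_add, LinearMap.add_apply, add_lie, h1' b hb.1 y hy u hu, h2' b hb.2 z hz u hu,
      add_zero]

lemma exists_annihilates_of_D [FiniteDimensional ℂ g] [LieAlgebra.IsKilling ℂ g]
    [IsNoetherianRing A] [Nontrivial g] (hIrr : IsSimpleOrder (LieSubmodule ℂ L V))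
    (hfd : ∀ l μ, FiniteDimensional ℂ (S.jw V l μ)) {l : Module.Dual ℂ S.H} {μ : ℂ}
    (hne : S.jw V l μ ≠ ⊥) {I : Ideal A} (hI : (I.restrictScalars ℂ).CoFG)
    (hD : ∀ a ∈ I, ∀ j, ∀ u ∈ S.jw V l μ, ⁅S.D j a, u⁆ = 0) :
    ∃ R : Ideal A, IsCofiniteIdeal R ∧ S.Annihilates V R := by
  obtain ⟨v, hv, hv0⟩ := Submodule.exists_mem_ne_zero_of_ne_bot hne
  obtain ⟨J, hJ, hJE⟩ := exists_ideal_le_annE hfd (l := l) (μ := μ)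
    fun a u hu => by simpa using D_mem_jw hu 0 a
  have hIJ := mul_cofg hI hJ
  have hle : ∀ c ∈ I * J, c ∈ I := fun c hc => Ideal.mul_le_left hc
  refine ⟨_, isCofiniteIdeal (mul_cofg hIJ hIJ), annihilates_mul hIrr hv0 (fun n x c hc => ?_)
    fun n c hc => hD c (hle c hc) n v hv⟩
  induction hc using Submodule.mul_induction_on' with
  | mem_mul_mem a ha b hb =>
    have h1 := S.lie_D_E (n - 1) 1 x a b v
    rw [hJE b hb x v hv, hD a ha _ v hv, lie_zero, lie_zero, zero_add, Int.cast_one, one_smul,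
      add_sub_cancel] at h1
    exact h1.symm
  | add a _ b _ ha hb => rw [map_add, add_lie, ha, hb, add_zero]

lemma sl2Rel (hK : ∀ v : V, ⁅S.K 1, v⁆ = 0) {e f h : g} (hef : ⁅e, f⁆ = h)
    (he : ⁅h, e⁆ = (2 : ℂ) • e) (hf : ⁅h, f⁆ = -((2 : ℂ) • f)) {n m : ℤ} (hnm : n + m = 0) :
    Sl2Rel (LieModule.toEnd ℂ L V (S.E n e 1)) (LieModule.toEnd ℂ L V (S.E m f 1))
      (LieModule.toEnd ℂ L V (S.E 0 h 1)) where
  ef v := by simp [S.lie_E_E n m, hef, hnm, hK]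
  he v := by simp [S.lie_E_E 0 n, he]
  hf v := by simp [S.lie_E_E 0 m, hf, sub_eq_add_neg]

lemma E_pow_mem_jw {l α : Module.Dual ℂ S.H} {μ : ℂ} {v : V} (hv : v ∈ S.jw V l μ) (n : ℤ) {x : g}
    (hx : x ∈ S.rootSp α) (a : A) (k : ℕ) :
    (LieModule.toEnd ℂ L V (S.E n x a) ^ k) v ∈ S.jw V (l + (k : ℂ) • α) (μ + k * n) := by
  induction k with
  | zero => simpa using hv
  | succ k ih =>
    rw [pow_succ', Module.End.mul_apply, LieModule.toEnd_apply_apply]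
    have h1 := E_mem_jw ih n hx a
    rw [add_assoc, add_assoc] at h1
    convert h1 using 2
    · push_cast; module
    · push_cast; ring

lemma finrank_jw_le (hK : ∀ v : V, ⁅S.K 1, v⁆ = 0) (hfd : ∀ l μ, FiniteDimensional ℂ (S.jw V l μ))
    {α : Module.Dual ℂ S.H} {e f : g} {h : S.H} (heα : e ∈ S.rootSp α) (hfα : f ∈ S.rootSp (-α))
    (hef : ⁅e, f⁆ = h) (he : ⁅(h : g), e⁆ = (2 : ℂ) • e) (hf : ⁅(h : g), f⁆ = -((2 : ℂ) • f))
    (hne : ∀ n, ∀ v : V, ∃ N : ℕ, (LieModule.toEnd ℂ L V (S.E n e 1) ^ N) v = 0)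
    (hnf : ∀ n, ∀ v : V, ∃ N : ℕ, (LieModule.toEnd ℂ L V (S.E n f 1) ^ N) v = 0)
    {l : Module.Dual ℂ S.H} {p : ℕ} (hp : l h = p) (μ : ℂ) (m : ℤ) :
    Module.finrank ℂ (S.jw V l μ) ≤ Module.finrank ℂ (S.jw V l (μ + p * m)) := by
  have := hfd l (μ + p * m)
  let T : Module.End ℂ V :=
    LieModule.toEnd ℂ L V (S.E m e 1) ^ p * LieModule.toEnd ℂ L V (S.E 0 f 1) ^ p
  have hT : ∀ v ∈ S.jw V l μ, T v ∈ S.jw V l (μ + p * m) := by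
    intro v hv
    have h1 := E_pow_mem_jw (E_pow_mem_jw hv 0 hfα 1 p) m heα 1 p
    rwa [smul_neg, neg_add_cancel_right, Int.cast_zero, mul_zero, add_zero] at h1
  refine LinearMap.finrank_le_finrank_of_injective (f := T.restrict hT) ?_
  rw [injective_iff_map_eq_zero]
  rintro ⟨v, hv⟩ hTv
  have h0 : T v = 0 := congrArg Subtype.val hTv
  rw [Module.End.mul_apply] at h0
  have hhv : LieModule.toEnd ℂ L V (S.E 0 (h : g) 1) v = (p : ℂ) • v := hp ▸ hv.1 h
  obtain ⟨r, hr⟩ := hne 0 v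
  have hrel := sl2Rel (S := S) hK hef he hf (add_zero 0)
  obtain ⟨s, hs⟩ := hnf (-m) ((LieModule.toEnd ℂ L V (S.E 0 f 1) ^ p) v)
  have h1 := (sl2Rel (S := S) hK hef he hf (add_neg_cancel m)).symm.eq_zero_of_f_pow s p _ (by
    rw [LinearMap.neg_apply, hrel.h_f_pow hhv]; module) hs h0
  exact Subtype.ext (hrel.eq_zero_of_f_pow r p v hhv hr h1)

lemma exists_annihilates_of_pos [FiniteDimensional ℂ g] [LieAlgebra.IsKilling ℂ g]
    [IsNoetherianRing A] [Nontrivial g] (hIrr : IsSimpleOrder (LieSubmodule ℂ L V))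
    (hK : ∀ v : V, ⁅S.K 1, v⁆ = 0) (hfd : ∀ l μ, FiniteDimensional ℂ (S.jw V l μ))
    {α : Module.Dual ℂ S.H} {e f : g} {h : S.H} (heα : e ∈ S.rootSp α) (hfα : f ∈ S.rootSp (-α))
    (hef : ⁅e, f⁆ = h) (he : ⁅(h : g), e⁆ = (2 : ℂ) • e) (hf : ⁅(h : g), f⁆ = -((2 : ℂ) • f))
    (hne : ∀ n, ∀ v : V, ∃ N : ℕ, (LieModule.toEnd ℂ L V (S.E n e 1) ^ N) v = 0)
    (hnf : ∀ n, ∀ v : V, ∃ N : ℕ, (LieModule.toEnd ℂ L V (S.E n f 1) ^ N) v = 0)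
    {l : Module.Dual ℂ S.H} {p : ℕ} (hp0 : 0 < p) (hp : l h = p) {μ : ℂ}
    (hμ : S.jw V l μ ≠ ⊥) : ∃ R : Ideal A, IsCofiniteIdeal R ∧ S.Annihilates V R := by
  have := hfd l μ
  have : ∀ j : ℤ, FiniteDimensional ℂ (S.jw V l (μ + j)) := fun j => hfd _ _
  have hB : ∀ j : ℤ, Module.finrank ℂ (S.jw V l (μ + j)) ≤
      ∑ r ∈ Finset.range p, Module.finrank ℂ (S.jw V l (μ + r)) := by
    intro j
    have h1 := finrank_jw_le hK hfd heα hfα hef he hf hne hnf hp (μ + j) (-(j / p))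
    have hpz : (p : ℤ) ≠ 0 := by omega
    have h2 : ((j % p).toNat : ℤ) = j % p := Int.toNat_of_nonneg (Int.emod_nonneg j hpz)
    have h3 : (μ + j + p * ((-(j / p) : ℤ) : ℂ)) = μ + ((j % p).toNat : ℂ) := by
      have h4 : (j : ℂ) = ((j % p).toNat : ℂ) + p * ((j / p : ℤ) : ℂ) := by
        have h5 := Int.emod_add_mul_ediv j p
        rw [← h2] at h5
        exact_mod_cast h5.symm
      push_cast
      linear_combination h4
    rw [h3] at h1
    refine h1.trans (Finset.single_le_sum
      (f := fun r : ℕ => Module.finrank ℂ (S.jw V l (μ + r))) (fun _ _ => Nat.zero_le _) ?_)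
    rw [Finset.mem_range]
    have := Int.emod_lt_of_pos j (by omega : (0 : ℤ) < p)
    omega
  obtain ⟨I, hI, hI'⟩ := (S.virRep V).exists_ideal_of_bounded (S.jw V l μ)
    (fun a u hu => by simpa [virRep_d] using D_mem_jw hu 0 a) (fun j => S.jw V l (μ + j)) hB
    (fun j a u hu => D_mem_jw hu j a)
  exact exists_annihilates_of_D hIrr hfd hμ hI hI'

end LoopAffVir

namespace LoopAffVir

open CofiniteIdeal

variable {g A L : Type*} [LieRing g] [LieAlgebra ℂ g] [CommRing A] [Algebra ℂ A]
  [LieRing L] [LieAlgebra ℂ L] {S : LoopAffVir g A L}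
  {V : Type*} [AddCommGroup V] [Module ℂ V] [LieRingModule L V] [LieModule ℂ L V]

lemma exists_annihilates_of_ne_zero [FiniteDimensional ℂ g] [LieAlgebra.IsKilling ℂ g]
    [IsNoetherianRing A] [Nontrivial g] (hIrr : IsSimpleOrder (LieSubmodule ℂ L V))
    (hInt : S.IsIntegrable V) (hK : ∀ v : V, ⁅S.K 1, v⁆ = 0)
    (hfd : ∀ l μ, FiniteDimensional ℂ (S.jw V l μ)) {l : Module.Dual ℂ S.H} {μ : ℂ}
    (hl : l ≠ 0) (hμ : S.jw V l μ ≠ ⊥) :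
    ∃ R : Ideal A, IsCofiniteIdeal R ∧ S.Annihilates V R := by
  have := S.isCartan
  obtain ⟨α, hα, hlα⟩ := LieAlgebra.IsKilling.exists_root_apply_coroot_ne_zero S.H hl
  obtain ⟨h', e, f, ht, he, hf⟩ :=
    LieAlgebra.IsKilling.exists_isSl2Triple_of_weight_isNonZero hα
  obtain rfl := ht.h_eq_coroot hα he hf
  set h := LieAlgebra.IsKilling.coroot α with hh
  have hef : ⁅e, f⁆ = h := ht.lie_e_f
  have hhe : ⁅(h : g), e⁆ = (2 : ℂ) • e := by rw [ht.lie_h_e_nsmul, ofNat_smul_eq_nsmul ℂ 2]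
  have hhf : ⁅(h : g), f⁆ = -((2 : ℂ) • f) := by rw [ht.lie_h_f_nsmul, ofNat_smul_eq_nsmul ℂ 2]
  have heα : e ∈ S.rootSp α.toLinear := (S.rootSp_def _ _).mpr fun k =>
    LieAlgebra.IsKilling.lie_eq_smul_of_mem_rootSpace he k
  have hfα : f ∈ S.rootSp (-α.toLinear) := (S.rootSp_def _ _).mpr fun k =>
    LieAlgebra.IsKilling.lie_eq_smul_of_mem_rootSpace hf k
  have hα0 : α.toLinear ≠ 0 := fun h0 => hα (by
    funext k
    exact LinearMap.congr_fun h0 k)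
  have hne : ∀ n, ∀ v : V, ∃ N : ℕ, (LieModule.toEnd ℂ L V (S.E n e 1) ^ N) v = 0 := fun n =>
    hInt.2.2 _ hα0 (fun h0 => ht.e_ne_zero ((Submodule.eq_bot_iff _).mp h0 e heα)) e heα n 1
  have hnf : ∀ n, ∀ v : V, ∃ N : ℕ, (LieModule.toEnd ℂ L V (S.E n f 1) ^ N) v = 0 := fun n =>
    hInt.2.2 _ (neg_ne_zero.mpr hα0)
      (fun h0 => ht.f_ne_zero ((Submodule.eq_bot_iff _).mp h0 f hfα)) f hfα n 1
  obtain ⟨v, hv, hv0⟩ := Submodule.exists_mem_ne_zero_of_ne_bot hμ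
  obtain ⟨z, hz⟩ := (sl2Rel (S := S) hK hef hhe hhf (add_zero 0)).eq_intCast (hne 0) (hnf 0) hv0
    (hv.1 h)
  rw [hz, Int.cast_ne_zero] at hlα
  rcases hlα.lt_or_gt with hneg | hpos
  · refine exists_annihilates_of_pos hIrr hK hfd (h := -h) (p := (-z).toNat) hfα
      (by rwa [neg_neg]) ?_ ?_ ?_ hnf hne (by omega) ?_ hμ
    · rw [← lie_skew, hef]; rfl
    · rw [NegMemClass.coe_neg, neg_lie, hhf, neg_neg]
    · rw [NegMemClass.coe_neg, neg_lie, hhe]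
    · rw [map_neg, hz, ← Int.cast_neg, ← Int.cast_natCast, Int.toNat_of_nonneg (by omega)]
  · refine exists_annihilates_of_pos hIrr hK hfd (p := z.toNat) heα hfα hef hhe hhf hne hnf
      (by omega) ?_ hμ
    rw [hz, ← Int.cast_natCast, Int.toNat_of_nonneg (by omega)]

variable (S V) in
/-- The elements `x` of `g̊` for which `x ⊗ ℂ[t,t⁻¹] ⊗ A` acts trivially on `V`. -/
def trivialIdeal : LieIdeal ℂ g where
  carrier := {x | ∀ n a, ∀ v : V, ⁅S.E n x a, v⁆ = 0}
  add_mem' hx hy n a v := by rw [map_add, LinearMap.add_apply, add_lie, hx, hy, add_zero]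
  zero_mem' n a v := by rw [map_zero, LinearMap.zero_apply, zero_lie]
  smul_mem' c x hx n a v := by rw [map_smul, LinearMap.smul_apply, smul_lie, hx, smul_zero]
  lie_mem {y x} hx n a v := by
    have h1 := S.lie_E_E n 0 y x a 1 v
    rw [hx, hx, lie_zero, zero_add, add_zero, mul_one] at h1
    rcases eq_or_ne n 0 with rfl | hn
    · simpa using h1.symm
    · rw [if_neg (by omega), zero_smul, add_zero] at h1
      exact h1.symm

lemma E_zero_eq_zero (hw : S.IsWeightModule V)
    (hl : ∀ (l : Module.Dual ℂ S.H) (μ : ℂ), S.jw V l μ ≠ ⊥ → l = 0) (h : S.H) (v : V) :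
    ⁅S.E 0 (h : g) 1, v⁆ = 0 := by
  suffices hN : LinearMap.ker (LieModule.toEnd ℂ L V (S.E 0 (h : g) 1)) = ⊤ from
    LinearMap.mem_ker.mp (hN.ge (trivial : v ∈ (⊤ : Submodule ℂ V)))
  rw [eq_top_iff, ← hw]
  refine iSup_le fun χ => ?_
  obtain ⟨l, hlχ⟩ := S.wtSpace_le_jw (V := V) χ
  refine hlχ.trans ?_
  rcases eq_or_ne (S.jw V l (χ S.d0)) ⊥ with h0 | h0
  · rw [h0]
    exact bot_le
  · obtain rfl := hl _ _ h0
    intro w hw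
    rw [LinearMap.mem_ker, LieModule.toEnd_apply_apply, hw.1, LinearMap.zero_apply, zero_smul]

lemma trivialIdeal_eq_top [LieAlgebra.IsSimple ℂ g] (hw : S.IsWeightModule V)
    (hl : ∀ (l : Module.Dual ℂ S.H) (μ : ℂ), S.jw V l μ ≠ ⊥ → l = 0) :
    S.trivialIdeal V = ⊤ := by
  have hmem : ∀ (h : S.H) (x : g), ⁅(h : g), x⁆ ∈ S.trivialIdeal V := by
    intro h x n a v
    have h1 := S.lie_E_E 0 n h x 1 a v
    rw [E_zero_eq_zero hw hl, E_zero_eq_zero hw hl, lie_zero] at h1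
    simpa using h1.symm
  refine (LieAlgebra.IsSimple.eq_bot_or_eq_top (R := ℂ) (S.trivialIdeal V)).resolve_left
    fun hbot => LieAlgebra.IsSimple.non_abelian ℂ (L := g) ?_
  have hH : ∀ (h : S.H) (x : g), ⁅(h : g), x⁆ = 0 := fun h x => by
    have h1 := hmem h x
    rwa [hbot, LieSubmodule.mem_bot] at h1
  have htop : ∀ x : g, x ∈ S.H := fun x => by
    rw [← S.isCartan.self_normalizing, LieSubalgebra.mem_normalizer_iff']
    intro y hy
    rw [hH ⟨y, hy⟩ x]
    exact S.H.zero_mem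
  exact ⟨fun x y => hH ⟨x, htop x⟩ y⟩

lemma exists_annihilates_of_eq_zero [FiniteDimensional ℂ g] [LieAlgebra.IsSimple ℂ g]
    [IsNoetherianRing A] [Nontrivial g] (hIrr : IsSimpleOrder (LieSubmodule ℂ L V))
    (hw : S.IsWeightModule V) (hfd : ∀ l μ, FiniteDimensional ℂ (S.jw V l μ))
    (hl : ∀ (l : Module.Dual ℂ S.H) (μ : ℂ), S.jw V l μ ≠ ⊥ → l = 0) {μ : ℂ}
    (hμ : S.jw V 0 μ ≠ ⊥) : ∃ R : Ideal A, IsCofiniteIdeal R ∧ S.Annihilates V R := by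
  have hE : ∀ n x a, ∀ v : V, ⁅S.E n x a, v⁆ = 0 := fun n x => by
    have hx : x ∈ S.trivialIdeal V := trivialIdeal_eq_top (V := V) hw hl ▸ LieSubmodule.mem_top x
    exact hx n
  have hK : ∀ a, ∀ v : V, ⁅S.K a, v⁆ = 0 := by
    obtain ⟨x, hx⟩ := exists_ne (0 : g)
    have hxy : ∃ y, S.form x y ≠ 0 := by
      by_contra! h
      exact hx (S.form_nondeg x h)
    obtain ⟨y, hy⟩ := hxy
    intro a v
    have h1 := S.lie_E_E 1 (-1) x y a 1 v
    simpa [hE, hy] using h1.symm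
  have hirr : (S.virRep V).Irreducible := by
    intro W hW
    rw [or_iff_not_imp_left]
    intro hW0
    obtain ⟨w, hw, hw0⟩ := Submodule.exists_mem_ne_zero_of_ne_bot hW0
    refine S.eq_top_of_generators hIrr hw hw0 (fun n x a v _ => ?_) (fun n a v hv => hW n a v hv)
      (fun a v _ => ?_) (fun a v hv => ?_)
    · rw [hE]; exact W.zero_mem
    · rw [hK]; exact W.zero_mem
    · have h1 := S.lie_D_D 2 (-2) a 1 v
      rw [if_pos rfl, mul_one] at h1
      have h2 : ⁅S.C a, v⁆ = (2 : ℂ) • (⁅S.D 2 a, ⁅S.D (-2) 1, v⁆⁆ - ⁅S.D (-2) 1, ⁅S.D 2 a, v⁆⁆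
          + (4 : ℂ) • ⁅S.D 0 a, v⁆) := by
        rw [h1]
        norm_num
        module
      rw [h2]
      exact W.smul_mem _ (W.add_mem (W.sub_mem (hW _ _ _ (hW _ _ _ hv)) (hW _ _ _ (hW _ _ _ hv)))
        (W.smul_mem _ (hW _ _ _ hv)))
  have hwt : ∀ ν, (S.virRep V).wt ν = S.jw V 0 ν := by
    intro ν
    ext v
    rw [VirRep.mem_wt]
    exact ⟨fun h => ⟨fun k => by rw [hE, LinearMap.zero_apply, zero_smul], h⟩, fun h => h.2⟩
  obtain ⟨v, hv0, I, hI, hIv⟩ := hirr.exists_ideal (μ := μ) (by rwa [hwt]) fun j => by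
    rw [hwt]; exact hfd _ _
  exact ⟨_, isCofiniteIdeal (mul_cofg hI hI), annihilates_mul hIrr hv0 (fun n x a _ => hE n x a v)
    fun n a ha => hIv a ha n⟩

end LoopAffVir

/-- Proposition `mp1`.  Let `V` be an irreducible integrable
`𝔏(A)`-module with finite dimensional weight spaces on which `K ⊗ 1` acts trivially.
Then there is a cofinite ideal `R` of `A` with `(𝔏 ⊗ R) ⬝ V = 0`. -/
theorem statement16
    {g A L : Type*} [LieRing g] [LieAlgebra ℂ g] [FiniteDimensional ℂ g]
    [LieAlgebra.IsSimple ℂ g]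
    [CommRing A] [Algebra ℂ A] [Algebra.FiniteType ℂ A]
    [LieRing L] [LieAlgebra ℂ L]
    (S : LoopAffVir g A L)
    (V : Type*) [AddCommGroup V] [Module ℂ V] [LieRingModule L V] [LieModule ℂ L V]
    (hIrr : IsSimpleOrder (LieSubmodule ℂ L V))
    (hInt : S.IsIntegrable V)
    (hK0 : ∀ v : V, ⁅S.K 1, v⁆ = 0)
    :
    ∃ R : Ideal A, IsCofiniteIdeal R ∧ S.Annihilates V R := by
  have : IsNoetherianRing A := Algebra.FiniteType.isNoetherianRing ℂ A
  have : Nontrivial g := by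
    by_contra h
    rw [not_nontrivial_iff_subsingleton] at h
    exact LieAlgebra.IsSimple.non_abelian ℂ (L := g) ⟨fun x y => Subsingleton.elim _ _⟩
  have : Nontrivial V := (LieSubmodule.nontrivial_iff ℂ L V).mp hIrr.toNontrivial
  obtain ⟨χ, hχ⟩ := LoopAffVir.exists_wtSpace_ne_bot hInt.1
  obtain ⟨c, hC⟩ := LoopAffVir.exists_C_eq_smul hIrr hχ
  have hfd := LoopAffVir.finiteDimensional_jw hInt.2.1 hK0 hC
  by_cases hl : ∀ (l : Module.Dual ℂ S.H) (μ : ℂ), S.jw V l μ ≠ ⊥ → l = 0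
  · obtain ⟨l, hlχ⟩ := LoopAffVir.wtSpace_le_jw (V := V) χ
    have hne : S.jw V l (χ S.d0) ≠ ⊥ := ne_bot_of_le_ne_bot hχ hlχ
    obtain rfl := hl _ _ hne
    exact LoopAffVir.exists_annihilates_of_eq_zero hIrr hInt.1 hfd hl hne
  · push Not at hl
    obtain ⟨l, μ, hμ, hl⟩ := hl
    exact LoopAffVir.exists_annihilates_of_ne_zero hIrr hInt hK0 hfd hl hμ
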